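/- arXiv:2109.02121 — 5 statements merged into one kernel-verified Lean document; each statement's English description precedes it below -/
import Mathlib

section
/- Let n ≥ 1 and for r > 0 set Φ(r) := vol( B(0,1) ∖ B(r e₁, 1) ) / r, where B(a,1) is the closed unit ball of ℝⁿ centered at a, vol is n-dimensional Lebesgue measure, and e₁ is the first standard basis vector of ℝⁿ. Then Φ is nonincreasing on (0, ∞) and lim_{r→0⁺} Φ(r) = ω_{n−1}; in particular vol( B(0,1) ∖ B(r e₁, 1) ) ≤ ω_{n−1} · r for every r > 0. -/
open MeasureTheory Filter Topology

/-- `ω_m = π^{m/2}/Γ(1 + m/2)`, the Lebesgue volume of the unit ball of `ℝ^m`. -/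
noncomputable def unitBallVol (m : ℕ) : ℝ :=
  Real.pi ^ ((m : ℝ) / 2) / Real.Gamma (1 + (m : ℝ) / 2)

lemma bd_slice (r h : ℝ) (hr : 0 < r) :
    volume {t : ℝ | |t| ≤ h ∧ h < |t - r|} = ENNReal.ofReal (min r (2*h)) := by
  rcases le_total r (2*h) with H | H
  · have : {t : ℝ | |t| ≤ h ∧ h < |t - r|} = Set.Ico (-h) (r-h) := by
      ext t
      simp only [Set.mem_ofPred_eq, Set.mem_Ico, abs_le, lt_abs]
      constructor
      · rintro ⟨⟨h1, h2⟩, h3 | h3⟩ <;> constructor <;> linarith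
      · rintro ⟨h1, h2⟩
        exact ⟨⟨h1, by linarith⟩, Or.inr (by linarith)⟩
    rw [this, Real.volume_Ico, min_eq_left H]; congr 1; ring
  · rw [min_eq_right H]
    apply le_antisymm
    · have : {t : ℝ | |t| ≤ h ∧ h < |t - r|} ⊆ Set.Icc (-h) h := by
        intro t ht; exact abs_le.1 ht.1
      refine (measure_mono this).trans ?_
      rw [Real.volume_Icc]; apply le_of_eq; congr 1; ring
    · have : Set.Ico (-h) h ⊆ {t : ℝ | |t| ≤ h ∧ h < |t - r|} := by
        rintro t ⟨h1, h2⟩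
        exact ⟨abs_le.2 ⟨h1, h2.le⟩, lt_abs.2 (Or.inr (by linarith))⟩
      refine le_trans ?_ (measure_mono this)
      rw [Real.volume_Ico]; apply le_of_eq; congr 1; ring

lemma bd_slice' (r q : ℝ) (hr : 0 < r) :
    volume {t : ℝ | t^2 + q ≤ 1 ∧ 1 < (t - r)^2 + q}
      = ENNReal.ofReal (min r (2*√(1-q))) := by
  rcases le_or_gt q 1 with H | H
  · rw [← bd_slice r _ hr]
    congr 1
    ext t
    simp only [Set.mem_ofPred_eq]
    rw [Real.le_sqrt (abs_nonneg t), Real.sqrt_lt (by linarith) (abs_nonneg _), sq_abs, sq_abs]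
    · constructor <;> rintro ⟨h1, h2⟩ <;> constructor <;> linarith
    · linarith
  · have : {t : ℝ | t^2 + q ≤ 1 ∧ 1 < (t - r)^2 + q} = ∅ := by
      ext t
      simp only [Set.mem_ofPred_eq, Set.mem_empty_iff_false, iff_false]
      rintro ⟨h1, h2⟩
      nlinarith [sq_nonneg t]
    rw [this, Real.sqrt_eq_zero_of_nonpos (by linarith)]
    simp [hr.le]

lemma bd_vol (m : ℕ) (r : ℝ) (hr : 0 < r) :
    volume (Metric.closedBall (0 : EuclideanSpace ℝ (Fin (m+1))) 1 \
          Metric.closedBall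
            (r • EuclideanSpace.single (0 : Fin (m+1)) (1 : ℝ)) 1)
    = ∫⁻ y : Fin m → ℝ, ENNReal.ofReal (min r (2*√(1-∑ i, y i ^ 2))) := by
  have hms : MeasurableSet (Metric.closedBall (0 : EuclideanSpace ℝ (Fin (m+1))) 1 \
          Metric.closedBall
            (r • EuclideanSpace.single (0 : Fin (m+1)) (1 : ℝ)) 1) :=
    measurableSet_closedBall.diff measurableSet_closedBall
  have h1 := (PiLp.volume_preserving_toLp (Fin (m+1))).comp
    ((volume_preserving_piFinSuccAbove (fun _ : Fin (m + 1) => ℝ) 0).symm)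
  rw [← h1.measure_preimage hms.nullMeasurableSet, Measure.volume_eq_prod,
    Measure.prod_apply_symm (h1.measurable hms)]
  congr 1
  ext y
  rw [← bd_slice' r _ hr]
  congr 1
  ext t
  simp only [Set.mem_preimage, Set.mem_sdiff, mem_closedBall_zero_iff, Metric.mem_closedBall,
    Set.mem_ofPred_eq, dist_eq_norm, EuclideanSpace.norm_eq, Real.sqrt_le_one, not_le,
    Fin.sum_univ_succ, Real.sqrt_le_left, Real.norm_eq_abs, sq_abs, Real.sqrt_le_iff, Function.comp]
  simp [Fin.insertNthEquiv]

lemma bd_S (m : ℕ) : volume {y : Fin m → ℝ | ∑ i, y i ^ 2 < 1} =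
    ENNReal.ofReal (unitBallVol m) := by
  have hpos : 0 < Real.pi := Real.pi_pos
  rcases Nat.eq_zero_or_pos m with rfl | hm
  · simp [unitBallVol, volume_pi]
  · have : Nonempty (Fin m) := ⟨⟨0, hm⟩⟩
    have h := EuclideanSpace.volume_ball (Fin m) (0 : EuclideanSpace ℝ (Fin m)) 1
    rw [← (PiLp.volume_preserving_toLp (Fin m)).measure_preimage
      measurableSet_ball.nullMeasurableSet] at h
    have h2 : WithLp.toLp 2 ⁻¹' Metric.ball (0 : EuclideanSpace ℝ (Fin m)) 1 =
        {y : Fin m → ℝ | ∑ i, y i ^ 2 < 1} := by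
      ext y
      simp [EuclideanSpace.norm_eq, Real.sqrt_lt']
    rw [h2] at h
    rw [h]
    simp only [ENNReal.ofReal_one, one_pow, one_mul, Fintype.card_fin, unitBallVol]
    congr 2
    · rw [Real.sqrt_eq_rpow, ← Real.rpow_natCast, ← Real.rpow_mul hpos.le]
      congr 1; ring
    · rw [add_comm]

lemma bd_Smeas (m : ℕ) : MeasurableSet {y : Fin m → ℝ | ∑ i, y i ^ 2 < 1} :=
  measurableSet_lt (by fun_prop) (by fun_prop)

lemma bd_pos (m : ℕ) : 0 ≤ unitBallVol m := by
  unfold unitBallVol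
  have := Real.pi_pos
  have : 0 < Real.Gamma (1 + (m : ℝ) / 2) := Real.Gamma_pos_of_pos (by positivity)
  positivity

lemma bd_real (m : ℕ) (r : ℝ) (hr : 0 < r) :
    (volume (Metric.closedBall (0 : EuclideanSpace ℝ (Fin (m+1))) 1 \
          Metric.closedBall
            (r • EuclideanSpace.single (0 : Fin (m+1)) (1 : ℝ)) 1)).toReal / r
    = ∫ y : Fin m → ℝ, min 1 (2*√(1-∑ i, y i ^ 2) / r) := by
  rw [bd_vol m r hr, ← integral_eq_lintegral_of_nonneg_ae, ← integral_div]
  · congr 1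
    ext y
    rw [← min_div_div_right hr.le, div_self hr.ne']
  · exact Eventually.of_forall fun y => by dsimp; positivity
  · exact Measurable.aestronglyMeasurable (by fun_prop)

lemma bd_le (m : ℕ) (r : ℝ) (hr : 0 < r) (y : Fin m → ℝ) :
    min 1 (2*√(1-∑ i, y i ^ 2) / r) ≤
      Set.indicator {y : Fin m → ℝ | ∑ i, y i ^ 2 < 1} (fun _ => (1:ℝ)) y := by
  by_cases h : ∑ i, y i ^ 2 < 1
  · simp [Set.indicator, h]
  · rw [Real.sqrt_eq_zero_of_nonpos (by linarith)]
    simp [Set.indicator, h]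

lemma bd_int1 (m : ℕ) :
    Integrable (Set.indicator {y : Fin m → ℝ | ∑ i, y i ^ 2 < 1} (fun _ => (1:ℝ))) := by
  refine (integrable_indicator_iff (bd_Smeas m)).2 (integrableOn_const ?_)
  rw [bd_S]; exact ENNReal.ofReal_ne_top

lemma bd_norm_le (m : ℕ) (r : ℝ) (hr : 0 < r) (y : Fin m → ℝ) :
    ‖min 1 (2*√(1-∑ i, y i ^ 2) / r)‖ ≤
      Set.indicator {y : Fin m → ℝ | ∑ i, y i ^ 2 < 1} (fun _ => (1:ℝ)) y := by
  rw [Real.norm_of_nonneg (by positivity)]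
  exact bd_le m r hr y

lemma bd_int (m : ℕ) (r : ℝ) (hr : 0 < r) :
    Integrable (fun y : Fin m → ℝ => min 1 (2*√(1-∑ i, y i ^ 2) / r)) :=
  (bd_int1 m).mono' (Measurable.aestronglyMeasurable (by fun_prop)) (Eventually.of_forall (bd_norm_le m r hr))

lemma bd_intS (m : ℕ) :
    ∫ y, (Set.indicator {y : Fin m → ℝ | ∑ i, y i ^ 2 < 1} (fun _ => (1:ℝ))) y
      = unitBallVol m := by
  rw [integral_indicator_const _ (bd_Smeas m), Measure.real, bd_S,
    ENNReal.toReal_ofReal (bd_pos m)]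
  simp

/-- the function `Φ(r) = vol(B(0,1) ∖ B(r e₁,1))/r` is nonincreasing on
`(0,∞)` and tends to `ω_{n−1}` as `r → 0⁺`; in particular
`vol(B(0,1) ∖ B(r e₁,1)) ≤ ω_{n−1} r` for all `r > 0`. -/
theorem ball_difference_volume (n : ℕ) (hn : 0 < n) :
    AntitoneOn
      (fun r : ℝ =>
        (volume (Metric.closedBall (0 : EuclideanSpace ℝ (Fin n)) 1 \
          Metric.closedBall
            (r • EuclideanSpace.single (⟨0, hn⟩ : Fin n) (1 : ℝ)) 1)).toReal / r)
      (Set.Ioi (0 : ℝ)) ∧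
    Tendsto
      (fun r : ℝ =>
        (volume (Metric.closedBall (0 : EuclideanSpace ℝ (Fin n)) 1 \
          Metric.closedBall
            (r • EuclideanSpace.single (⟨0, hn⟩ : Fin n) (1 : ℝ)) 1)).toReal / r)
      (𝓝[>] (0 : ℝ)) (𝓝 (unitBallVol (n - 1))) ∧
    ∀ r : ℝ, 0 < r →
      (volume (Metric.closedBall (0 : EuclideanSpace ℝ (Fin n)) 1 \
        Metric.closedBall
          (r • EuclideanSpace.single (⟨0, hn⟩ : Fin n) (1 : ℝ)) 1)).toReal ≤
        unitBallVol (n - 1) * r := by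
  obtain ⟨m, rfl⟩ : ∃ m, n = m + 1 := ⟨n - 1, by omega⟩
  have h0 : (⟨0, hn⟩ : Fin (m+1)) = 0 := rfl
  rw [h0, Nat.add_sub_cancel]
  refine ⟨?_, ?_, ?_⟩
  · intro a ha b hb hab
    have ha' : 0 < a := ha
    have hb' : 0 < b := hb
    beta_reduce
    rw [bd_real m a ha', bd_real m b hb']
    refine integral_mono (bd_int m b hb') (bd_int m a ha') fun y => ?_
    dsimp only
    gcongr
  · have key : Tendsto (fun r : ℝ => ∫ y : Fin m → ℝ, min 1 (2*√(1-∑ i, y i ^ 2) / r))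
        (𝓝[>] (0 : ℝ)) (𝓝 (unitBallVol m)) := by
      rw [← bd_intS m]
      refine tendsto_integral_filter_of_dominated_convergence _
        (Eventually.of_forall fun r => Measurable.aestronglyMeasurable (by fun_prop)) ?_ (bd_int1 m) ?_
      · filter_upwards [self_mem_nhdsWithin] with r hr
        exact Eventually.of_forall (bd_norm_le m r hr)
      · refine Eventually.of_forall fun y => ?_
        apply tendsto_const_nhds.congr'
        by_cases h : ∑ i, y i ^ 2 < 1
        · have hs : 0 < 2*√(1-∑ i, y i ^ 2) := by
            have := Real.sqrt_pos.2 (sub_pos.2 h)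
            positivity
          filter_upwards [Ioo_mem_nhdsGT hs] with r hr
          have : 1 ≤ 2*√(1-∑ i, y i ^ 2) / r := (one_le_div hr.1).2 hr.2.le
          simp [Set.indicator, h, this]
        · refine Eventually.of_forall fun r => ?_
          rw [Real.sqrt_eq_zero_of_nonpos (by linarith)]
          simp [Set.indicator, h]
    refine key.congr' ?_
    filter_upwards [self_mem_nhdsWithin] with r hr
    exact (bd_real m r hr).symm
  · intro r hr
    rw [← div_le_iff₀ hr, bd_real m r hr, ← bd_intS m]
    exact integral_mono (bd_int m r hr) (bd_int1 m) (bd_le m r hr)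
end

section
/- Let χ : ℝ → [0,1] be a C^∞ function with χ = 1 on [−1,1] and χ = 0 outside [−2,2]. Then for every x ∈ ℝ the improper integral defining Ai(x) converges, and for every integer k ≥ 1 there exists a constant C_k > 0 such that for every ε ∈ (0,1] and every x ∈ ℝ with x > −ε^{-2}: | (2π)^{-1} ∫_ℝ e^{i(t³/3 + x t)} χ(ε t) dt − Ai(x) | ≤ C_k (ε^{-2} + x)^{-k}. -/
open MeasureTheory Filter Topology

/-- The Airy function `Ai(x) = lim_{R→∞} (1/π) ∫_0^R cos(t³/3 + x t) dt`. -/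
noncomputable def Airy (x : ℝ) : ℝ :=
  limUnder Filter.atTop
    (fun R : ℝ => (1 / Real.pi) * ∫ t in (0 : ℝ)..R, Real.cos (t ^ 3 / 3 + x * t))

structure GoodSeq (B : ℕ → ℝ → ℝ) : Prop where
  der : ∀ j s, HasDerivAt (B j) (B (j+1) s) s
  zero : ∀ j s, |s| ≤ 1 → B j s = 0
  bdd : ∀ j, ∃ C, 0 ≤ C ∧ ∀ s, |B j s| ≤ C

lemma GoodSeq.flat {B : ℕ → ℝ → ℝ} (hB : GoodSeq B) (M : ℕ) :
    ∀ j, ∃ C, 0 ≤ C ∧ ∀ s, 1 ≤ |s| → |B j s| ≤ C * (|s| - 1) ^ M := by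
  induction M with
  | zero =>
    intro j
    obtain ⟨C, hC, h⟩ := hB.bdd j
    exact ⟨C, hC, fun s _ => by simpa using h s⟩
  | succ M ih =>
    intro j
    obtain ⟨C, hC, h⟩ := ih (j+1)
    refine ⟨C, hC, fun s hs => ?_⟩
    have key : ∀ u ∈ Set.Icc (-|s|) |s|, ‖B (j+1) u‖ ≤ C * (|s| - 1) ^ M := by
      intro u hu
      have hu' : |u| ≤ |s| := abs_le.mpr hu
      rw [Real.norm_eq_abs]
      by_cases h1 : 1 ≤ |u|
      · refine (h u h1).trans ?_
        gcongr
      · rw [hB.zero (j+1) u (not_le.mp h1).le, abs_zero]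
        have : 0 ≤ |s| - 1 := by linarith
        positivity
    obtain ⟨e, he1, he2⟩ : ∃ e : ℝ, |e| = 1 ∧ |s - e| = |s| - 1 := by
      rcases le_total 0 s with h0 | h0
      · rw [abs_of_nonneg h0] at hs ⊢
        exact ⟨1, by simp, abs_of_nonneg (by linarith)⟩
      · rw [abs_of_nonpos h0] at hs ⊢
        exact ⟨-1, by simp, by rw [abs_of_nonpos (by linarith)]; ring⟩
    have := (convex_Icc (-|s|) |s|).norm_image_sub_le_of_norm_hasDerivWithin_le
      (f := B j) (f' := B (j+1)) (x := e) (y := s) (C := C * (|s| - 1) ^ M)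
      (fun u _ => (hB.der j u).hasDerivWithinAt) key
      (abs_le.mp (by rw [he1]; exact hs)) (abs_le.mp le_rfl)
    rw [hB.zero j e he1.le, sub_zero, Real.norm_eq_abs, Real.norm_eq_abs, he2] at this
    rw [pow_succ, ← mul_assoc]
    exact this

noncomputable def atom (B : ℕ → ℝ → ℝ) (μ : ℝ) (j m n : ℕ) (s : ℝ) : ℝ :=
  B j s * s ^ m * ((s ^ 2 - 1 + μ) ^ n)⁻¹

lemma one_le_sq_of_abs {s : ℝ} (hs : 1 ≤ |s|) : 1 ≤ s ^ 2 := by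
  rw [← sq_abs]; nlinarith

lemma GoodSeq.flat' {B : ℕ → ℝ → ℝ} (hB : GoodSeq B) (M j : ℕ) :
    ∃ C, 0 ≤ C ∧ ∀ μ, 0 < μ → ∀ s, 1 ≤ |s| →
      |B j s| ≤ C * ((s ^ 2 - 1 + μ) / (s ^ 2 + μ)) ^ M := by
  obtain ⟨C, hC, h⟩ := hB.flat M j
  obtain ⟨D, hD, h'⟩ := hB.bdd j
  refine ⟨(C + D) * 4 ^ M, by positivity, fun μ hμ s hs => ?_⟩
  have hs2 := one_le_sq_of_abs hs
  have hp : 0 < s ^ 2 + μ := by positivity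
  have hq : 0 ≤ (s ^ 2 - 1 + μ) / (s ^ 2 + μ) := div_nonneg (by linarith) hp.le
  rw [mul_assoc, ← mul_pow]
  have hmono : ∀ (u : ℝ) (D' : ℝ), 0 ≤ D' → D' ≤ C + D → 0 ≤ u →
      u ≤ 4 * ((s ^ 2 - 1 + μ) / (s ^ 2 + μ)) → |B j s| ≤ D' * u ^ M →
      |B j s| ≤ (C + D) * (4 * ((s ^ 2 - 1 + μ) / (s ^ 2 + μ))) ^ M := by
    intro u D' h1 h2 h3 h4 h5
    refine h5.trans ?_
    gcongr
  have hsq : s ^ 2 = |s| ^ 2 := (sq_abs s).symm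
  rcases le_total |s| 2 with h2 | h2
  · refine hmono (|s| - 1) C hC (by linarith) (by linarith) ?_ (h s hs)
    rw [← mul_div_assoc, le_div_iff₀ hp, hsq]
    nlinarith [mul_nonneg (sub_nonneg.mpr hs) (sub_nonneg.mpr h2), mul_nonneg (mul_nonneg (sub_nonneg.mpr hs) (sub_nonneg.mpr h2)) (abs_nonneg s)]
  · refine hmono 1 D hD (by linarith) (by norm_num) ?_ (by simpa using h' s)
    rw [← mul_div_assoc, le_div_iff₀ hp, hsq]
    nlinarith

lemma GoodSeq.atom_bound {B : ℕ → ℝ → ℝ} (hB : GoodSeq B) (k j m n : ℕ) (hk : m + k + 1 ≤ n) :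
    ∃ C, 0 ≤ C ∧ ∀ μ, 0 < μ → ∀ s,
      |atom B μ j m n s| ≤ C * ((1 + μ) ^ k)⁻¹ * (1 + s ^ 2)⁻¹ := by
  obtain ⟨C, hC, h⟩ := hB.flat' n j
  refine ⟨2 * C, by positivity, fun μ hμ s => ?_⟩
  by_cases hs : 1 ≤ |s|
  · have hs2 := one_le_sq_of_abs hs
    have hp : 0 < s ^ 2 + μ := by positivity
    have hg : 0 < s ^ 2 - 1 + μ := by linarith
    have h1 := h μ hμ s hs
    have hsm : |s| ^ m ≤ (s ^ 2 + μ) ^ m := by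
      gcongr
      rw [← sq_abs]; nlinarith
    have hsn : (s ^ 2 + μ) ^ m * ((1 + μ) ^ k * (1 + s ^ 2)) ≤ 2 * (s ^ 2 + μ) ^ n := by
      have e1 : (s ^ 2 + μ) ^ (m + k + 1) ≤ (s ^ 2 + μ) ^ n :=
        pow_le_pow_right₀ (by linarith) hk
      have e2 : (1 + μ) ^ k ≤ (s ^ 2 + μ) ^ k := by gcongr
      calc _ ≤ (s ^ 2 + μ) ^ m * ((s ^ 2 + μ) ^ k * (2 * (s ^ 2 + μ))) := by
            gcongr; linarith
        _ = 2 * (s ^ 2 + μ) ^ (m + k + 1) := by ring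
        _ ≤ _ := by linarith
    unfold atom
    rw [abs_mul, abs_mul, abs_inv, abs_pow, abs_pow, abs_of_pos hg]
    calc _ ≤ (C * ((s ^ 2 - 1 + μ) / (s ^ 2 + μ)) ^ n) * (s ^ 2 + μ) ^ m *
          ((s ^ 2 - 1 + μ) ^ n)⁻¹ := by gcongr
      _ = C * ((s ^ 2 + μ) ^ m / (s ^ 2 + μ) ^ n) := by
          rw [div_pow]; field_simp
      _ ≤ C * (2 * (((1 + μ) ^ k)⁻¹ * (1 + s ^ 2)⁻¹)) := by
          gcongr
          rw [← mul_inv, ← div_eq_mul_inv, div_le_div_iff₀ (by positivity) (by positivity)]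
          exact hsn
      _ = _ := by ring
  · unfold atom
    rw [hB.zero j s (not_le.mp hs).le]
    simp only [zero_mul, abs_zero]
    positivity

lemma GoodSeq.atom_deriv {B : ℕ → ℝ → ℝ} (hB : GoodSeq B) (μ : ℝ) (hμ : 0 < μ) (j m n : ℕ) (s : ℝ) :
    HasDerivAt (atom B μ j m n)
      (atom B μ (j+1) m n s + m * atom B μ j (m-1) n s - 2 * n * atom B μ j (m+1) (n+1) s) s := by
  by_cases hs : 1 ≤ |s|
  · have hs2 := one_le_sq_of_abs hs
    have hg : s ^ 2 - 1 + μ ≠ 0 := by linarith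
    have h1 : HasDerivAt (fun s : ℝ => (s ^ 2 - 1 + μ)) (2 * s) s := by
      simpa using (((hasDerivAt_id s).pow 2).sub_const 1).add_const μ
    have h2 := (h1.pow n).inv (pow_ne_zero n hg)
    have h3 := ((hB.der j s).mul (hasDerivAt_pow m s)).mul h2
    refine h3.congr_deriv ?_
    unfold atom
    simp only [Pi.mul_apply, Pi.pow_apply, Pi.inv_apply]
    rcases n with _ | n
    · simp; ring
    · simp only [Nat.add_sub_cancel]
      push_cast
      field_simp
      ring
  · have hs := not_le.mp hs
    have h0 : ∀ j m n, atom B μ j m n s = 0 := fun j m n => by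
      unfold atom; rw [hB.zero j s hs.le]; simp
    simp only [h0]
    have : atom B μ j m n =ᶠ[𝓝 s] fun _ => 0 := by
      have : ∀ᶠ u in 𝓝 s, |u| < 1 := (continuous_abs.tendsto s).eventually (gt_mem_nhds hs)
      filter_upwards [this] with u hu
      unfold atom; rw [hB.zero j u hu.le]; simp
    simpa using (hasDerivAt_const s (0:ℝ)).congr_of_eventuallyEq this

lemma GoodSeq.atom_cont {B : ℕ → ℝ → ℝ} (hB : GoodSeq B) (μ : ℝ) (hμ : 0 < μ) (j m n : ℕ) :
    Continuous (atom B μ j m n) :=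
  continuous_iff_continuousAt.mpr fun s => (hB.atom_deriv μ hμ j m n s).continuousAt

noncomputable def osc (δ μ s : ℝ) : ℂ :=
  Complex.exp (Complex.I * ((δ⁻¹ * (s ^ 3 / 3 + (μ - 1) * s) : ℝ) : ℂ))

lemma osc_norm (δ μ s : ℝ) : ‖osc δ μ s‖ = 1 := by
  unfold osc; rw [mul_comm]; exact Complex.norm_exp_ofReal_mul_I _

lemma osc_deriv (δ μ s : ℝ) : HasDerivAt (osc δ μ)
    (osc δ μ s * (Complex.I * ((δ⁻¹ * (s ^ 2 - 1 + μ) : ℝ) : ℂ))) s := by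
  have h1 : HasDerivAt (fun s : ℝ => δ⁻¹ * (s ^ 3 / 3 + (μ - 1) * s))
      (δ⁻¹ * (s ^ 2 - 1 + μ)) s := by
    have := ((((hasDerivAt_pow 3 s).div_const 3).add ((hasDerivAt_id s).const_mul (μ - 1))).const_mul δ⁻¹)
    refine this.congr_deriv ?_
    push_cast; ring
  exact ((h1.ofReal_comp).const_mul Complex.I).cexp

lemma osc_cont (δ μ : ℝ) : Continuous (osc δ μ) := by
  unfold osc; fun_prop

noncomputable def oint (B : ℕ → ℝ → ℝ) (δ μ : ℝ) (j m n : ℕ) (R : ℝ) : ℂ :=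
  ∫ s in (-R)..R, osc δ μ s * ((atom B μ j m n s : ℝ) : ℂ)

lemma GoodSeq.int_cont {B : ℕ → ℝ → ℝ} (hB : GoodSeq B) (δ μ : ℝ) (hμ : 0 < μ) (j m n : ℕ) :
    Continuous (fun s => osc δ μ s * ((atom B μ j m n s : ℝ) : ℂ)) :=
  (osc_cont δ μ).mul (Complex.continuous_ofReal.comp (hB.atom_cont μ hμ j m n))

lemma GoodSeq.step {B : ℕ → ℝ → ℝ} (hB : GoodSeq B) (δ μ : ℝ) (hδ : 0 < δ) (hμ : 0 < μ)
    (j m n : ℕ) (R : ℝ) :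
    oint B δ μ j m n R = -Complex.I * δ *
      (osc δ μ R * (atom B μ j m (n+1) R : ℝ) - osc δ μ (-R) * (atom B μ j m (n+1) (-R) : ℝ)
      - (oint B δ μ (j+1) m (n+1) R + m * oint B δ μ j (m-1) (n+1) R
        - 2 * (n+1) * oint B δ μ j (m+1) (n+2) R)) := by
  have hd : ∀ s, HasDerivAt (fun s => osc δ μ s * ((atom B μ j m (n+1) s : ℝ) : ℂ))
      (Complex.I * δ⁻¹ * (osc δ μ s * ((atom B μ j m n s : ℝ) : ℂ)) +
        (osc δ μ s * ((atom B μ (j+1) m (n+1) s : ℝ) : ℂ) +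
         m * (osc δ μ s * ((atom B μ j (m-1) (n+1) s : ℝ) : ℂ)) -
         2 * (n+1) * (osc δ μ s * ((atom B μ j (m+1) (n+2) s : ℝ) : ℂ)))) s := by
    intro s
    refine ((osc_deriv δ μ s).mul (hB.atom_deriv μ hμ j m (n+1) s).ofReal_comp).congr_deriv ?_
    have : (s ^ 2 - 1 + μ) * atom B μ j m (n+1) s = atom B μ j m n s := by
      unfold atom
      by_cases hs : 1 ≤ |s|
      · have hs2 := one_le_sq_of_abs hs
        have hg : s ^ 2 - 1 + μ ≠ 0 := by linarith
        field_simp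
        ring
      · rw [hB.zero j s (not_le.mp hs).le]; simp
    rw [← this]
    push_cast
    ring
  have hi : ∀ j m n, IntervalIntegrable (fun s => osc δ μ s * ((atom B μ j m n s : ℝ) : ℂ))
      volume (-R) R := fun j m n => (hB.int_cont δ μ hμ j m n).intervalIntegrable _ _
  have := intervalIntegral.integral_eq_sub_of_hasDerivAt (a := -R) (b := R) (fun s _ => hd s)
    (((hi j m n).const_mul _).add (((hi _ _ _).add ((hi _ _ _).const_mul _)).sub ((hi _ _ _).const_mul _)))
  rw [intervalIntegral.integral_add ((hi j m n).const_mul _)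
      (((hi _ _ _).add ((hi _ _ _).const_mul _)).sub ((hi _ _ _).const_mul _)),
    intervalIntegral.integral_sub ((hi _ _ _).add ((hi _ _ _).const_mul _)) ((hi _ _ _).const_mul _),
    intervalIntegral.integral_add (hi _ _ _) ((hi _ _ _).const_mul _)] at this
  simp only [intervalIntegral.integral_const_mul] at this
  unfold oint
  rw [← this]
  have hδ' : (δ : ℂ) ≠ 0 := by exact_mod_cast hδ.ne'
  push_cast
  field_simp
  linear_combination ((∫ s in (-R)..R, osc δ μ s * ((atom B μ j m n s : ℝ) : ℂ))) * Complex.I_sq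

lemma GoodSeq.main {B : ℕ → ℝ → ℝ} (hB : GoodSeq B) (k K : ℕ) :
    ∀ j m n, m ≤ n → m + k + 1 ≤ K + n → ∃ C, 0 ≤ C ∧ ∀ δ μ R : ℝ, 0 < δ → δ ≤ 1 → 0 < μ → 0 ≤ R →
      ‖oint B δ μ j m n R‖ ≤ C * (δ ^ K * ((1 + μ) ^ k)⁻¹ + (1 + R ^ 2)⁻¹) := by
  induction K with
  | zero =>
    intro j m n hmn h
    obtain ⟨C, hC, hb⟩ := hB.atom_bound k j m n (by omega)
    refine ⟨C * Real.pi, by positivity, fun δ μ R hδ _ hμ hR => ?_⟩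
    have hI : Integrable (fun s : ℝ => C * ((1 + μ) ^ k)⁻¹ * (1 + s ^ 2)⁻¹) :=
      integrable_inv_one_add_sq.const_mul _
    calc ‖oint B δ μ j m n R‖ ≤ ∫ s in (-R)..R, C * ((1 + μ) ^ k)⁻¹ * (1 + s ^ 2)⁻¹ := by
          refine intervalIntegral.norm_integral_le_of_norm_le (by linarith) ?_ hI.intervalIntegrable
          refine Eventually.of_forall fun s _ => ?_
          rw [norm_mul, osc_norm, one_mul, Complex.norm_real]
          exact hb μ hμ s
      _ ≤ ∫ s : ℝ, C * ((1 + μ) ^ k)⁻¹ * (1 + s ^ 2)⁻¹ := by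
          rw [intervalIntegral.integral_of_le (by linarith)]
          exact setIntegral_le_integral hI (Eventually.of_forall fun s => by positivity)
      _ = C * Real.pi * (δ ^ 0 * ((1 + μ) ^ k)⁻¹) := by
          rw [integral_const_mul, integral_univ_inv_one_add_sq]; ring
      _ ≤ _ := by
          gcongr
          have : 0 ≤ (1 + R ^ 2)⁻¹ := by positivity
          linarith
  | succ K ih =>
    intro j m n hmn h
    obtain ⟨C0, hC0, h0⟩ := hB.atom_bound 0 j m (n+1) (by omega)
    obtain ⟨C1, hC1, h1⟩ := ih (j+1) m (n+1) (by omega) (by omega)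
    obtain ⟨C2, hC2, h2⟩ := ih j (m-1) (n+1) (by omega) (by omega)
    obtain ⟨C3, hC3, h3⟩ := ih j (m+1) (n+2) (by omega) (by omega)
    refine ⟨2 * C0 + (C1 + m * C2 + 2 * (n+1) * C3), by positivity, fun δ μ R hδ hδ1 hμ hR => ?_⟩
    have h0a := h0 μ hμ R
    have h0b := h0 μ hμ (-R)
    have h1 := h1 δ μ R hδ hδ1 hμ hR
    have h2 := h2 δ μ R hδ hδ1 hμ hR
    have h3 := h3 δ μ R hδ hδ1 hμ hR
    rw [hB.step δ μ hδ hμ, norm_mul, norm_mul, norm_neg, Complex.norm_I, one_mul, Complex.norm_real,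
      Real.norm_of_nonneg hδ.le]
    simp only [pow_zero, inv_one, mul_one, neg_sq] at h0a h0b
    set P := δ ^ K * ((1 + μ) ^ k)⁻¹ with hP
    set Q := (1 + R ^ 2)⁻¹ with hQ
    have hP0 : 0 ≤ P := by positivity
    have hQ0 : 0 ≤ Q := by positivity
    have hN : ‖osc δ μ R * (atom B μ j m (n+1) R : ℝ) - osc δ μ (-R) * (atom B μ j m (n+1) (-R) : ℝ)
      - (oint B δ μ (j+1) m (n+1) R + m * oint B δ μ j (m-1) (n+1) R
        - 2 * (n+1) * oint B δ μ j (m+1) (n+2) R)‖ ≤ (C0 * Q + C0 * Q) +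
          ((C1 * (P + Q) + m * (C2 * (P + Q))) + 2 * (n+1) * (C3 * (P + Q))) := by
      refine (norm_sub_le _ _).trans (add_le_add ((norm_sub_le _ _).trans (add_le_add ?_ ?_))
        ((norm_sub_le _ _).trans (add_le_add ((norm_add_le _ _).trans (add_le_add h1 ?_)) ?_)))
      · rw [norm_mul, osc_norm, one_mul, Complex.norm_real]; exact h0a
      · rw [norm_mul, osc_norm, one_mul, Complex.norm_real]; exact h0b
      · rw [norm_mul, Complex.norm_natCast]; gcongr
      · have : ‖(2 * ((n:ℂ)+1))‖ = 2 * ((n:ℝ)+1) := by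
          rw [norm_mul]
          have : ((n:ℂ)+1) = ((n+1 : ℕ) : ℂ) := by push_cast; rfl
          rw [this, Complex.norm_natCast]; simp
        rw [norm_mul, this]; gcongr
    have e1 : δ ^ (K+1) * ((1 + μ) ^ k)⁻¹ = δ * P := by rw [hP]; ring
    rw [e1]
    set D := C1 + m * C2 + 2 * (n+1) * C3 with hD
    have hD0 : 0 ≤ D := by positivity
    calc _ ≤ δ * ((C0 * Q + C0 * Q) +
          ((C1 * (P + Q) + m * (C2 * (P + Q))) + 2 * (n+1) * (C3 * (P + Q)))) := by gcongr
      _ = D * (δ * P) + (2 * C0 + D) * (δ * Q) := by rw [hD]; ring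
      _ ≤ (2 * C0 + D) * (δ * P) + (2 * C0 + D) * (1 * Q) := by
          gcongr
          linarith
      _ = _ := by ring

lemma GoodSeq.conv {B : ℕ → ℝ → ℝ} (hB : GoodSeq B) (δ μ : ℝ) (hδ : 0 < δ) (hμ : 0 < μ) :
    ∃ L, Tendsto (oint B δ μ 0 0 0) atTop (𝓝 L) := by
  have hc : ∀ j m n, m + 1 ≤ n → ∃ L, Tendsto (oint B δ μ j m n) atTop (𝓝 L) := by
    intro j m n h
    obtain ⟨C, hC, hb⟩ := hB.atom_bound 0 j m n (by omega)
    have : Integrable (fun s => osc δ μ s * ((atom B μ j m n s : ℝ) : ℂ)) := by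
      refine (integrable_inv_one_add_sq.const_mul (C * ((1 + μ) ^ 0)⁻¹)).mono'
        (hB.int_cont δ μ hμ j m n).aestronglyMeasurable (Eventually.of_forall fun s => ?_)
      rw [norm_mul, osc_norm, one_mul, Complex.norm_real]
      exact hb μ hμ s
    exact ⟨_, intervalIntegral_tendsto_integral this tendsto_neg_atTop_atBot tendsto_id⟩
  have hb0 : ∀ σ : ℝ, σ ^ 2 = 1 → Tendsto (fun R => osc δ μ (σ * R) * ((atom B μ 0 0 (0+1) (σ * R) : ℝ) : ℂ)) atTop (𝓝 0) := by
    intro σ hσ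
    obtain ⟨C, hC, hb⟩ := hB.atom_bound 0 0 0 (0+1) (by omega)
    have ht : Tendsto (fun R : ℝ => C * ((1 + μ) ^ 0)⁻¹ * (1 + R ^ 2)⁻¹) atTop (𝓝 0) := by
      have : Tendsto (fun R : ℝ => (1 + R ^ 2)⁻¹) atTop (𝓝 0) :=
        (tendsto_atTop_add_const_left _ _ (tendsto_pow_atTop two_ne_zero)).inv_tendsto_atTop
      have h := this.const_mul (C * ((1 + μ) ^ 0)⁻¹)
      rwa [mul_zero] at h
    refine squeeze_zero_norm (fun R => ?_) ht
    rw [norm_mul, osc_norm, one_mul, Complex.norm_real]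
    have := hb μ hμ (σ * R)
    rwa [mul_pow, hσ, one_mul] at this
  obtain ⟨L1, h1⟩ := hc 1 0 1 le_rfl
  obtain ⟨L3, h3⟩ := hc 0 1 2 le_rfl
  have ha := hb0 1 (by norm_num)
  have hb := hb0 (-1) (by norm_num)
  refine ⟨_, (((ha.sub hb).sub (h1.sub (h3.const_mul 2))).const_mul (-Complex.I * δ)).congr fun R => ?_⟩
  rw [hB.step δ μ hδ hμ 0 0 0 R]
  simp

lemma goodSeq_of_cutoff (χ : ℝ → ℝ) (hχ : ContDiff ℝ (⊤ : ℕ∞) χ)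
    (hχone : ∀ t ∈ Set.Icc (-1 : ℝ) 1, χ t = 1)
    (hχzero : ∀ t, t ∉ Set.Icc (-2 : ℝ) 2 → χ t = 0) :
    GoodSeq (fun j => iteratedDeriv j (fun s => 1 - χ s)) := by
  have hf : ContDiff ℝ (⊤ : ℕ∞) (fun s => 1 - χ s) := contDiff_const.sub hχ
  set B : ℕ → ℝ → ℝ := fun j => iteratedDeriv j (fun s => 1 - χ s) with hBdef
  have hder : ∀ j s, HasDerivAt (B j) (B (j+1) s) s := by
    intro j s
    have : Differentiable ℝ (B j) :=
      hf.differentiable_iteratedDeriv j (by exact_mod_cast WithTop.coe_lt_top j)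
    simp only [hBdef, iteratedDeriv_succ]
    exact (this s).hasDerivAt
  have hB0 : ∀ s, B 0 s = 1 - χ s := fun s => by simp [hBdef]
  have hloc : ∀ (U : Set ℝ), IsOpen U → ∀ j c, (∀ s ∈ U, B j s = c) → ∀ s ∈ U, B (j+1) s = 0 := by
    intro U hU j c h s hs
    have h1 : B j =ᶠ[𝓝 s] fun _ => c := by
      filter_upwards [hU.mem_nhds hs] with u hu using h u hu
    exact (hder j s).unique ((hasDerivAt_const s c).congr_of_eventuallyEq h1)
  have hcont : ∀ j, Continuous (B j) := fun j =>
    continuous_iff_continuousAt.mpr fun s => (hder j s).continuousAt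
  have hin : ∀ j, ∀ s ∈ Set.Ioo (-1:ℝ) 1, B j s = 0 := by
    intro j
    induction j with
    | zero => intro s hs; rw [hB0, hχone s ⟨hs.1.le, hs.2.le⟩, sub_self]
    | succ j ih => exact hloc _ isOpen_Ioo j 0 ih
  have hout0 : ∀ s ∈ (Set.Icc (-2:ℝ) 2)ᶜ, B 0 s = 1 := by
    intro s hs; rw [hB0, hχzero s hs, sub_zero]
  have hout : ∀ j, ∀ s ∈ (Set.Icc (-2:ℝ) 2)ᶜ, B (j+1) s = 0 := by
    intro j
    induction j with
    | zero => exact hloc _ isClosed_Icc.isOpen_compl 0 1 hout0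
    | succ j ih => exact hloc _ isClosed_Icc.isOpen_compl (j+1) 0 ih
  refine ⟨hder, ?_, ?_⟩
  · intro j s hs
    have hcl : s ∈ closure (Set.Ioo (-1:ℝ) 1) := by
      rw [closure_Ioo (by norm_num)]; exact abs_le.mp hs
    have : closure (Set.Ioo (-1:ℝ) 1) ⊆ {s | B j s = 0} :=
      closure_minimal (fun s hs => hin j s hs) (isClosed_eq (hcont j) continuous_const)
    exact this hcl
  · intro j
    obtain ⟨C, hC⟩ := (isCompact_Icc (a := (-2:ℝ)) (b := 2)).exists_bound_of_continuousOn
      (hcont j).continuousOn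
    refine ⟨max C 1, le_trans zero_le_one (le_max_right _ _), fun s => ?_⟩
    by_cases hs : s ∈ Set.Icc (-2:ℝ) 2
    · exact (hC s hs).trans (le_max_left _ _)
    · refine le_trans ?_ (le_max_right _ _)
      cases j with
      | zero => rw [hout0 s hs]; simp
      | succ j => rw [hout j s hs]; simp

lemma trunc_identity (χ : ℝ → ℝ) (hχ : Continuous χ)
    (hχzero : ∀ t, t ∉ Set.Icc (-2 : ℝ) 2 → χ t = 0) (ε x R : ℝ) (hε : 0 < ε) (hR : 2 / ε < R) :
    ∫ t in (-R)..R, Complex.exp (Complex.I * ((t ^ 3 / 3 + x * t : ℝ) : ℂ)) =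
      (∫ t : ℝ, Complex.exp (Complex.I * ((t ^ 3 / 3 + x * t : ℝ) : ℂ)) * ((χ (ε * t) : ℝ) : ℂ)) +
      ((ε⁻¹ : ℝ) : ℂ) * oint (fun j => iteratedDeriv j (fun s => 1 - χ s)) (ε ^ 3) (1 + ε ^ 2 * x)
        0 0 0 (ε * R) := by
  have hR' : 2 < ε * R := by rw [div_lt_iff₀ hε] at hR; linarith
  have h1 : (∫ t : ℝ, Complex.exp (Complex.I * ((t ^ 3 / 3 + x * t : ℝ) : ℂ)) * ((χ (ε * t) : ℝ) : ℂ))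
      = ∫ t in (-R)..R, Complex.exp (Complex.I * ((t ^ 3 / 3 + x * t : ℝ) : ℂ)) * ((χ (ε * t) : ℝ) : ℂ) := by
    symm
    apply intervalIntegral.integral_eq_integral_of_support_subset
    intro t ht
    by_contra hc
    apply ht
    have : χ (ε * t) = 0 := by
      apply hχzero
      rintro ⟨ha, hb⟩
      apply hc
      constructor
      · by_contra hh
        have := mul_le_mul_of_nonneg_left (not_lt.mp hh) hε.le
        linarith
      · by_contra hh
        have := mul_le_mul_of_nonneg_left (not_le.mp hh).le hε.le
        linarith
    simp only [this, Complex.ofReal_zero, mul_zero]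
  have h2 : ((ε⁻¹ : ℝ) : ℂ) * oint (fun j => iteratedDeriv j (fun s => 1 - χ s)) (ε ^ 3) (1 + ε ^ 2 * x)
        0 0 0 (ε * R) = ∫ t in (-R)..R, Complex.exp (Complex.I * ((t ^ 3 / 3 + x * t : ℝ) : ℂ)) *
          ((1 - χ (ε * t) : ℝ) : ℂ) := by
    unfold oint
    have := intervalIntegral.integral_comp_mul_left (a := -R) (b := R)
      (fun s => osc (ε ^ 3) (1 + ε ^ 2 * x) s *
        ((atom (fun j => iteratedDeriv j (fun s => 1 - χ s)) (1 + ε ^ 2 * x) 0 0 0 s : ℝ) : ℂ)) hε.ne'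
    rw [Complex.real_smul, mul_neg] at this
    rw [← this]
    congr 1
    ext t
    unfold osc atom
    have e : (ε ^ 3)⁻¹ * ((ε * t) ^ 3 / 3 + (1 + ε ^ 2 * x - 1) * (ε * t)) = t ^ 3 / 3 + x * t := by
      field_simp
      ring
    rw [e]
    simp
  rw [h1, h2, ← intervalIntegral.integral_add]
  · congr 1
    ext t
    push_cast
    ring
  · apply Continuous.intervalIntegrable; fun_prop
  · apply Continuous.intervalIntegrable; fun_prop

lemma exp_int_eq_cos (x R : ℝ) :
    ∫ t in (-R)..R, Complex.exp (Complex.I * ((t ^ 3 / 3 + x * t : ℝ) : ℂ)) =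
      ((2 * ∫ t in (0:ℝ)..R, Real.cos (t ^ 3 / 3 + x * t) : ℝ) : ℂ) := by
  have hi : ∀ a b : ℝ, IntervalIntegrable
      (fun t : ℝ => Complex.exp (Complex.I * ((t ^ 3 / 3 + x * t : ℝ) : ℂ))) volume a b := fun a b => by
    apply Continuous.intervalIntegrable; fun_prop
  rw [← intervalIntegral.integral_add_adjacent_intervals (hi (-R) 0) (hi 0 R)]
  have h1 := intervalIntegral.integral_comp_neg (a := 0) (b := R)
    (fun t : ℝ => Complex.exp (Complex.I * ((t ^ 3 / 3 + x * t : ℝ) : ℂ)))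
  rw [neg_zero] at h1
  rw [← h1, ← intervalIntegral.integral_add]
  · rw [← intervalIntegral.integral_const_mul, ← intervalIntegral.integral_ofReal]
    congr 1
    ext t
    have e : ((-t) ^ 3 / 3 + x * (-t)) = -(t ^ 3 / 3 + x * t) := by ring
    rw [e, Complex.ofReal_neg, Complex.ofReal_mul, Complex.ofReal_cos, Complex.cos]
    push_cast
    ring_nf
  · apply Continuous.intervalIntegrable; fun_prop
  · exact hi 0 R

/-- the improper integral defining the Airy function converges for every
`x`, and the smoothly truncated oscillatory integral
`(2π)^{-1} ∫ e^{i(t³/3 + xt)} χ(εt) dt` approximates `Ai(x)` up to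
`C_k (ε^{-2} + x)^{-k}` for every `k ≥ 1`, uniformly for `ε ∈ (0,1]` and `x > −ε^{-2}`. -/
theorem airy_truncation
    (χ : ℝ → ℝ) (hχ : ContDiff ℝ (⊤ : ℕ∞) χ)
    (hχ01 : ∀ t, χ t ∈ Set.Icc (0 : ℝ) 1)
    (hχone : ∀ t ∈ Set.Icc (-1 : ℝ) 1, χ t = 1)
    (hχzero : ∀ t, t ∉ Set.Icc (-2 : ℝ) 2 → χ t = 0) :
    (∀ x : ℝ, Tendsto
        (fun R : ℝ => (1 / Real.pi) * ∫ t in (0 : ℝ)..R, Real.cos (t ^ 3 / 3 + x * t))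
        atTop (𝓝 (Airy x))) ∧
    ∀ k : ℕ, 1 ≤ k → ∃ C : ℝ, 0 < C ∧
      ∀ ε ∈ Set.Ioc (0 : ℝ) 1, ∀ x : ℝ, -ε⁻¹ ^ 2 < x →
        ‖(((2 * Real.pi)⁻¹ : ℝ) : ℂ) *
              (∫ t : ℝ, Complex.exp (Complex.I * ((t ^ 3 / 3 + x * t : ℝ) : ℂ)) *
                ((χ (ε * t) : ℝ) : ℂ)) -
            ((Airy x : ℝ) : ℂ)‖ ≤
          C * ((ε⁻¹ ^ 2 + x) ^ k)⁻¹ := by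
  
  have hB := goodSeq_of_cutoff χ hχ hχone hχzero
  have hχc : Continuous χ := hχ.continuous
  have hμ : ∀ ε x : ℝ, 0 < ε → -ε⁻¹ ^ 2 < x → 0 < 1 + ε ^ 2 * x := by
    intro ε x hε h
    have := mul_lt_mul_of_pos_left h (pow_pos hε 2)
    have e : ε ^ 2 * -ε⁻¹ ^ 2 = -1 := by field_simp
    linarith
  have hconv : ∀ x : ℝ, Tendsto
        (fun R : ℝ => (1 / Real.pi) * ∫ t in (0 : ℝ)..R, Real.cos (t ^ 3 / 3 + x * t))
        atTop (𝓝 (Airy x)) := by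
    intro x
    obtain ⟨ε, hε, hx⟩ : ∃ ε : ℝ, 0 < ε ∧ -ε⁻¹ ^ 2 < x := by
      refine ⟨(1 + |x|)⁻¹, by positivity, ?_⟩
      rw [inv_inv]
      nlinarith [neg_abs_le x, abs_nonneg x, sq_nonneg |x|]
    obtain ⟨L, hL⟩ := hB.conv (ε ^ 3) (1 + ε ^ 2 * x) (pow_pos hε 3) (hμ ε x hε hx)
    have hL' := ((hL.comp (tendsto_id.const_mul_atTop hε)).const_mul ((ε⁻¹ : ℝ) : ℂ)).const_add
      (∫ t : ℝ, Complex.exp (Complex.I * ((t ^ 3 / 3 + x * t : ℝ) : ℂ)) * ((χ (ε * t) : ℝ) : ℂ))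
    have hE := hL'.congr' (f₂ := fun R : ℝ => ((2 * ∫ t in (0:ℝ)..R, Real.cos (t ^ 3 / 3 + x * t) : ℝ) : ℂ)) (by
      filter_upwards [eventually_gt_atTop (2 / ε)] with R hR
      rw [← exp_int_eq_cos, trunc_identity χ hχc hχzero ε x R hε hR]
      rfl)
    have hre := (((Complex.continuous_re.tendsto _).comp hE).const_mul (1 / (2 * Real.pi)))
    have : ∃ l : ℝ, Tendsto
        (fun R : ℝ => (1 / Real.pi) * ∫ t in (0 : ℝ)..R, Real.cos (t ^ 3 / 3 + x * t))
        atTop (𝓝 l) := by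
      refine ⟨_, hre.congr fun R => ?_⟩
      simp only [Function.comp, Complex.ofReal_re]
      field_simp
    exact tendsto_nhds_limUnder this
  refine ⟨hconv, fun k hk => ?_⟩
  obtain ⟨C, hC, hb⟩ := hB.main k (k+1) 0 0 0 le_rfl (by omega)
  refine ⟨(2 * Real.pi)⁻¹ * C + 1, by positivity, fun ε hε x hx => ?_⟩
  obtain ⟨hε0, hε1⟩ := hε
  have hm := hμ ε x hε0 hx
  set J : ℂ := ∫ t : ℝ, Complex.exp (Complex.I * ((t ^ 3 / 3 + x * t : ℝ) : ℂ)) * ((χ (ε * t) : ℝ) : ℂ) with hJ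
  have hlam : 0 < ε⁻¹ ^ 2 + x := by linarith
  -- limit of the difference
  have ht : Tendsto (fun R : ℝ => ‖(((2 * Real.pi)⁻¹ : ℝ) : ℂ) * J -
      (((1 / Real.pi) * ∫ t in (0 : ℝ)..R, Real.cos (t ^ 3 / 3 + x * t) : ℝ) : ℂ)‖) atTop
      (𝓝 ‖(((2 * Real.pi)⁻¹ : ℝ) : ℂ) * J - ((Airy x : ℝ) : ℂ)‖) :=
    (((Complex.continuous_ofReal.tendsto _).comp (hconv x)).const_sub _).norm
  have ht2 : Tendsto (fun R : ℝ => (2 * Real.pi)⁻¹ * (ε⁻¹ * (C * ((ε ^ 3) ^ (k+1) * ((1 + (1 + ε ^ 2 * x)) ^ k)⁻¹ +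
      (1 + (ε * R) ^ 2)⁻¹)))) atTop (𝓝 ((2 * Real.pi)⁻¹ * (ε⁻¹ * (C * ((ε ^ 3) ^ (k+1) * ((1 + (1 + ε ^ 2 * x)) ^ k)⁻¹ + 0))))) := by
    have : Tendsto (fun R : ℝ => (1 + (ε * R) ^ 2)⁻¹) atTop (𝓝 0) :=
      (tendsto_atTop_add_const_left _ _ ((tendsto_pow_atTop two_ne_zero).comp
        (tendsto_id.const_mul_atTop hε0))).inv_tendsto_atTop
    exact (((this.const_add _).const_mul _).const_mul _).const_mul _
  have hle := le_of_tendsto_of_tendsto ht ht2 (by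
    filter_upwards [eventually_gt_atTop (2 / ε)] with R hR
    have hR0 : 0 < R := lt_trans (by positivity) hR
    have hid := trunc_identity χ hχc hχzero ε x R hε0 hR
    rw [exp_int_eq_cos, ← hJ] at hid
    have e : (((1 / Real.pi) * ∫ t in (0 : ℝ)..R, Real.cos (t ^ 3 / 3 + x * t) : ℝ) : ℂ) =
        (((2 * Real.pi)⁻¹ : ℝ) : ℂ) * ((2 * ∫ t in (0 : ℝ)..R, Real.cos (t ^ 3 / 3 + x * t) : ℝ) : ℂ) := by
      rw [← Complex.ofReal_mul]
      congr 1
      field_simp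
    rw [e, hid, ← mul_sub, sub_add_cancel_left, norm_mul, norm_neg, norm_mul, Complex.norm_real,
      Complex.norm_real, Real.norm_of_nonneg (by positivity), Real.norm_of_nonneg (by positivity)]
    gcongr
    exact hb (ε ^ 3) (1 + ε ^ 2 * x) (ε * R) (by positivity) (pow_le_one₀ hε0.le hε1) hm (by positivity))
  refine hle.trans ?_
  have e1 : 1 + ε ^ 2 * x = ε ^ 2 * (ε⁻¹ ^ 2 + x) := by field_simp
  have hb1 : ((1 + (1 + ε ^ 2 * x)) ^ k)⁻¹ ≤ ((ε ^ 2 * (ε⁻¹ ^ 2 + x)) ^ k)⁻¹ := by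
    rw [e1]
    gcongr
    linarith
  set lam := ε⁻¹ ^ 2 + x with hl
  have hinv : 0 ≤ (lam ^ k)⁻¹ := by positivity
  calc _ ≤ (2 * Real.pi)⁻¹ * (ε⁻¹ * (C * ((ε ^ 3) ^ (k+1) * ((ε ^ 2 * lam) ^ k)⁻¹ + 0))) := by gcongr
    _ = (2 * Real.pi)⁻¹ * C * (ε ^ (k + 2) * (lam ^ k)⁻¹) := by
        rw [mul_pow]; field_simp; ring
    _ ≤ (2 * Real.pi)⁻¹ * C * (1 * (lam ^ k)⁻¹) := by
        gcongr
        exact pow_le_one₀ hε0.le hε1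
    _ ≤ _ := by
        rw [one_mul, add_mul, one_mul]; linarith
end

section
/- Let n ≥ 1 and k ∈ ℕ. There exists a constant C_k > 0 such that for every Schwartz function f : ℝⁿ → ℂ and every ħ ∈ (0,1]: ‖f‖_{C^{2k}} ≤ C_k · ħ^{−2k − n/2} · ‖ (1 − ħ²Δ)^{k + ⌊n/4⌋ + 1} f ‖_{L²(ℝⁿ)}. -/
open MeasureTheory
open scoped ENNReal

/-- The Euclidean Laplacian `Δf = Σ_i ∂²f/∂x_i²`. -/
noncomputable def laplacianC {n : ℕ} (f : EuclideanSpace ℝ (Fin n) → ℂ)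
    (x : EuclideanSpace ℝ (Fin n)) : ℂ :=
  ∑ i : Fin n,
    fderiv ℝ (fun y => fderiv ℝ f y (EuclideanSpace.single i 1)) x
      (EuclideanSpace.single i 1)

/-- The map `f ↦ (1 − ħ²Δ) f`. -/
noncomputable def helmholtzOp {n : ℕ} (hbar : ℝ)
    (f : EuclideanSpace ℝ (Fin n) → ℂ) : EuclideanSpace ℝ (Fin n) → ℂ :=
  fun x => f x - (hbar ^ 2 : ℝ) • laplacianC f x

/-- Partial derivative in the `i`-th coordinate direction. -/
noncomputable def pderivE {n : ℕ} (i : Fin n)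
    (f : EuclideanSpace ℝ (Fin n) → ℂ) : EuclideanSpace ℝ (Fin n) → ℂ :=
  fun x => fderiv ℝ f x (EuclideanSpace.single i 1)

/-- Multi-index partial derivative `∂^α f`. -/
noncomputable def mderivE {n : ℕ} (α : Fin n → ℕ)
    (f : EuclideanSpace ℝ (Fin n) → ℂ) : EuclideanSpace ℝ (Fin n) → ℂ :=
  (List.finRange n).foldr (fun i g => (pderivE i)^[α i] g) f

/-- The finite set of multi-indices `α : Fin n → ℕ` with `|α| = Σ_i α_i = j`. -/
def multiIndices (n j : ℕ) : Finset (Fin n → ℕ) :=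
  (Fintype.piFinset fun _ : Fin n => Finset.range (j + 1)).filter
    fun α => ∑ i, α i = j

/-- `‖f‖_{C^k} = sup_x Σ_{|α| ≤ k} |∂^α f(x)|`. -/
noncomputable def CkNorm {n : ℕ} (k : ℕ)
    (f : EuclideanSpace ℝ (Fin n) → ℂ) : ℝ :=
  ⨆ x : EuclideanSpace ℝ (Fin n),
    ∑ j ∈ Finset.range (k + 1), ∑ α ∈ multiIndices n j, ‖mderivE α f x‖

open FourierTransform LineDeriv in
theorem aux_pderiv {n : ℕ} (i : Fin n) (f : SchwartzMap (EuclideanSpace ℝ (Fin n)) ℂ) :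
    ∃ g : SchwartzMap (EuclideanSpace ℝ (Fin n)) ℂ, ⇑g = pderivE i ⇑f ∧
      ∀ ξ, 𝓕 g ξ = (2 * Real.pi * Complex.I) * (ξ i : ℂ) * 𝓕 f ξ := by
  refine ⟨∂_{(EuclideanSpace.single i (1:ℝ))} f, ?_, fun ξ => ?_⟩
  · ext x
    rw [SchwartzMap.lineDerivOp_apply_eq_fderiv]; rfl
  · rw [SchwartzMap.fourier_lineDerivOp_eq]
    have : (inner ℝ · (EuclideanSpace.single i (1:ℝ)) :
      EuclideanSpace ℝ (Fin n) → ℝ).HasTemperateGrowth := by fun_prop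
    rw [_root_.smul_apply, SchwartzMap.smulLeftCLM_apply_apply this, EuclideanSpace.inner_single_right]
    simp [mul_assoc]

open FourierTransform in
theorem aux_pderiv_iter {n : ℕ} (i : Fin n) (m : ℕ) (f : SchwartzMap (EuclideanSpace ℝ (Fin n)) ℂ) :
    ∃ g : SchwartzMap (EuclideanSpace ℝ (Fin n)) ℂ, ⇑g = (pderivE i)^[m] ⇑f ∧
      ∀ ξ, ‖𝓕 g ξ‖ ≤ (2 * Real.pi * ‖ξ‖) ^ m * ‖𝓕 f ξ‖ := by
  induction m with
  | zero => exact ⟨f, rfl, fun ξ => by simp⟩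
  | succ m ih =>
    obtain ⟨g, hg, hb⟩ := ih
    obtain ⟨g', hg', hb'⟩ := aux_pderiv i g
    refine ⟨g', by rw [hg', hg, Function.iterate_succ_apply'], fun ξ => ?_⟩
    rw [hb', norm_mul, pow_succ']
    have h1 : ‖(2 * Real.pi * Complex.I) * (ξ i : ℂ)‖ ≤ 2 * Real.pi * ‖ξ‖ := by
      have := PiLp.norm_apply_le ξ i
      simp only [norm_mul, Complex.norm_I, Complex.norm_real, Complex.norm_ofNat, mul_one]
      rw [Real.norm_of_nonneg Real.pi_pos.le]
      have := Real.pi_pos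
      gcongr
    calc _ ≤ (2 * Real.pi * ‖ξ‖) * ((2 * Real.pi * ‖ξ‖) ^ m * ‖𝓕 f ξ‖) := by
          gcongr
          exact hb ξ
      _ = _ := by ring

open FourierTransform in
theorem aux_foldr {n : ℕ} (α : Fin n → ℕ) (l : List (Fin n))
    (f : SchwartzMap (EuclideanSpace ℝ (Fin n)) ℂ) :
    ∃ g : SchwartzMap (EuclideanSpace ℝ (Fin n)) ℂ,
      ⇑g = l.foldr (fun i g => (pderivE i)^[α i] g) ⇑f ∧
      ∀ ξ, ‖𝓕 g ξ‖ ≤ (2 * Real.pi * ‖ξ‖) ^ (l.map α).sum * ‖𝓕 f ξ‖ := by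
  induction l with
  | nil => exact ⟨f, rfl, fun ξ => by simp⟩
  | cons i l ih =>
    obtain ⟨g, hg, hb⟩ := ih
    obtain ⟨g', hg', hb'⟩ := aux_pderiv_iter i (α i) g
    refine ⟨g', by rw [hg', hg]; rfl, fun ξ => (hb' ξ).trans ?_⟩
    rw [List.map_cons, List.sum_cons, pow_add, mul_assoc _ _ ‖𝓕 f ξ‖]
    have := Real.pi_pos
    exact mul_le_mul_of_nonneg_left (hb ξ) (by positivity)

open FourierTransform in
theorem aux_mderiv {n : ℕ} (α : Fin n → ℕ) (f : SchwartzMap (EuclideanSpace ℝ (Fin n)) ℂ) :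
    ∃ g : SchwartzMap (EuclideanSpace ℝ (Fin n)) ℂ, ⇑g = mderivE α ⇑f ∧
      ∀ ξ, ‖𝓕 g ξ‖ ≤ (2 * Real.pi * ‖ξ‖) ^ (∑ i, α i) * ‖𝓕 f ξ‖ := by
  obtain ⟨g, hg, hb⟩ := aux_foldr α (List.finRange n) f
  refine ⟨g, hg, fun ξ => ?_⟩
  have h : ∑ i, α i = ((List.finRange n).map α).sum := by
    rw [← List.ofFn_eq_map, List.sum_ofFn]
  rw [h]; exact hb ξ

open FourierTransform in
theorem aux_helm {n : ℕ} (h : ℝ) (f : SchwartzMap (EuclideanSpace ℝ (Fin n)) ℂ) :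
    ∃ g : SchwartzMap (EuclideanSpace ℝ (Fin n)) ℂ, ⇑g = helmholtzOp h ⇑f ∧
      ∀ ξ, 𝓕 g ξ = ((1 + ‖(2 * Real.pi * h) • ξ‖ ^ 2 : ℝ) : ℂ) * 𝓕 f ξ := by
  choose D hD hF using fun i => aux_pderiv (n := n) i
  refine ⟨f - ((h ^ 2 : ℝ) : ℂ) • ∑ i, D i (D i f), ?_, fun ξ => ?_⟩
  · ext x
    simp only [helmholtzOp, laplacianC, _root_.sub_apply, _root_.smul_apply,
      _root_.sum_apply, hD]
    rfl
  · have e : 𝓕 (f - ((h ^ 2 : ℝ) : ℂ) • ∑ i, D i (D i f)) =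
        𝓕 f - ((h ^ 2 : ℝ) : ℂ) • ∑ i, 𝓕 (D i (D i f)) := by
      simp only [← SchwartzMap.fourierTransformCLM_apply ℂ]
      rw [map_sub, map_smul, map_sum]
    rw [e]
    simp only [_root_.sub_apply, _root_.smul_apply,
      _root_.sum_apply, hF, norm_smul, mul_pow, EuclideanSpace.norm_sq_eq]
    simp only [Real.norm_eq_abs, sq_abs, smul_eq_mul]
    push_cast
    rw [add_mul, one_mul, sub_eq_add_neg, ← mul_neg, ← Finset.sum_neg_distrib, Finset.mul_sum,
      Finset.mul_sum, Finset.sum_mul]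
    congr 1
    refine Finset.sum_congr rfl fun i _ => ?_
    linear_combination (-(4 * (Real.pi:ℂ)^2 * h^2 * (ξ i)^2 * 𝓕 f ξ)) * Complex.I_sq

open FourierTransform in
theorem aux_helm_iter {n : ℕ} (h : ℝ) (m : ℕ) (f : SchwartzMap (EuclideanSpace ℝ (Fin n)) ℂ) :
    ∃ g : SchwartzMap (EuclideanSpace ℝ (Fin n)) ℂ, ⇑g = (helmholtzOp h)^[m] ⇑f ∧
      ∀ ξ, ‖𝓕 g ξ‖ = (1 + ‖(2 * Real.pi * h) • ξ‖ ^ 2) ^ m * ‖𝓕 f ξ‖ := by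
  induction m with
  | zero => exact ⟨f, rfl, fun ξ => by simp⟩
  | succ m ih =>
    obtain ⟨g, hg, hb⟩ := ih
    obtain ⟨g', hg', hb'⟩ := aux_helm h g
    refine ⟨g', by rw [hg', hg, Function.iterate_succ_apply'], fun ξ => ?_⟩
    rw [hb', norm_mul, hb, Complex.norm_real, Real.norm_of_nonneg (by positivity)]
    ring

open FourierTransform in
theorem aux_sup {n : ℕ} (g : SchwartzMap (EuclideanSpace ℝ (Fin n)) ℂ) (x) :
    ‖g x‖ ≤ ∫ ξ, ‖𝓕 g ξ‖ := by
  have h := SchwartzMap.norm_fourier_apply_le_toLp_one (𝓕 g) (-x)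
  rw [SchwartzMap.norm_toLp_one] at h
  refine le_trans (le_of_eq ?_) h
  congr 1
  have h1 : 𝓕⁻ (𝓕 g) x = g x := by rw [FourierTransform.fourierInv_fourier_eq]
  rw [← h1, SchwartzMap.fourierInv_coe, SchwartzMap.fourier_coe (𝓕 g), Real.fourierInv_eq_fourier_neg]

/-- weight -/
noncomputable def auxW {n : ℕ} (ξ : EuclideanSpace ℝ (Fin n)) : ℝ := ((1 + ‖ξ‖ ^ 2) ^ (n / 4 + 1))⁻¹

theorem auxW_cont {n : ℕ} : Continuous (auxW (n := n)) := by
  unfold auxW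
  refine Continuous.inv₀ (by fun_prop) fun x => by positivity

theorem auxW_int {n : ℕ} : Integrable (fun ξ : EuclideanSpace ℝ (Fin n) => auxW ξ ^ 2) := by
  have h := integrable_rpow_neg_one_add_norm_sq (E := EuclideanSpace ℝ (Fin n)) (μ := volume)
    (r := ((4 * (n / 4 + 1) : ℕ) : ℝ)) (by
      rw [finrank_euclideanSpace_fin]
      exact_mod_cast (by omega))
  refine h.congr (Filter.Eventually.of_forall fun ξ => ?_)
  have e : (-((4 * (n / 4 + 1) : ℕ) : ℝ) / 2) = -(((n / 4 + 1) * 2 : ℕ) : ℝ) := by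
    push_cast; ring
  simp only [auxW]
  rw [e, Real.rpow_neg (by positivity), Real.rpow_natCast, inv_pow, pow_mul]

theorem aux_CS {n : ℕ} (c : ℝ) (hc : 0 < c) (G : SchwartzMap (EuclideanSpace ℝ (Fin n)) ℂ) :
    Integrable (fun ξ => auxW (c • ξ) * ‖G ξ‖) ∧
    ∫ ξ, auxW (c • ξ) * ‖G ξ‖ ≤
      (c ^ (-(n:ℝ) / 2) * (∫ ξ : EuclideanSpace ℝ (Fin n), auxW ξ ^ 2) ^ (1/2 : ℝ)) *
        (∫ ξ, ‖G ξ‖ ^ 2) ^ (1/2 : ℝ) := by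
  have hw0 : ∀ ξ : EuclideanSpace ℝ (Fin n), 0 ≤ auxW ξ := fun ξ => by unfold auxW; positivity
  have hwm : MemLp (fun ξ : EuclideanSpace ℝ (Fin n) => auxW (c • ξ)) 2 := by
    rw [memLp_two_iff_integrable_sq]
    · exact (integrable_comp_smul_iff volume (fun ξ : EuclideanSpace ℝ (Fin n) => auxW ξ ^ 2) hc.ne').2 auxW_int
    · exact (auxW_cont.comp (continuous_const_smul c)).aestronglyMeasurable
  have hG : MemLp (fun ξ => ‖G ξ‖) 2 := (G.memLp 2).norm
  refine ⟨MemLp.integrable_mul hwm hG, ?_⟩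
  have h := integral_mul_le_Lp_mul_Lq_of_nonneg (μ := volume) (p := 2) (q := 2)
    (f := fun ξ : EuclideanSpace ℝ (Fin n) => auxW (c • ξ)) (g := fun ξ => ‖G ξ‖)
    Real.HolderConjugate.two_two
    (Filter.Eventually.of_forall fun ξ => hw0 _) (Filter.Eventually.of_forall fun ξ => norm_nonneg _)
    (by simpa using hwm) (by simpa using hG)
  simp only [Real.rpow_two] at h
  refine h.trans (le_of_eq ?_)
  congr 1
  rw [Measure.integral_comp_smul volume (fun ξ : EuclideanSpace ℝ (Fin n) => auxW ξ ^ 2) c,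
    finrank_euclideanSpace_fin, abs_of_pos (by positivity), smul_eq_mul,
    Real.mul_rpow (by positivity) (integral_nonneg fun ξ => by positivity)]
  congr 1
  rw [← Real.rpow_natCast, ← Real.rpow_neg hc.le, ← Real.rpow_mul hc.le]
  congr 1; ring

open FourierTransform in
theorem aux_main {n k : ℕ} (f : SchwartzMap (EuclideanSpace ℝ (Fin n)) ℂ) (h : ℝ) (h0 : 0 < h)
    (h1 : h ≤ 1) (α : Fin n → ℕ) (hα : ∑ i, α i ≤ 2 * k) (x : EuclideanSpace ℝ (Fin n)) :
    ENNReal.ofReal ‖mderivE α ⇑f x‖ ≤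
      ENNReal.ofReal (((2 * Real.pi) ^ (-(n:ℝ) / 2) *
        (∫ ξ : EuclideanSpace ℝ (Fin n), auxW ξ ^ 2) ^ (1/2 : ℝ)) *
          h ^ (-(2 * k : ℝ) - (n : ℝ) / 2)) *
        eLpNorm ((helmholtzOp h)^[k + n / 4 + 1] ⇑f) 2
              (volume : Measure (EuclideanSpace ℝ (Fin n))) := by
  obtain ⟨g, hg, hgb⟩ := aux_mderiv α f
  obtain ⟨G, hG, hGb⟩ := aux_helm_iter h (k + n / 4 + 1) f
  have hpi := Real.pi_pos
  rw [← hg, ← hG, (G.memLp 2 volume).eLpNorm_eq_integral_rpow_norm (by simp) (by simp),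
    ← ENNReal.ofReal_mul (by
      have : 0 ≤ ∫ ξ : EuclideanSpace ℝ (Fin n), auxW ξ ^ 2 := integral_nonneg fun ξ => by positivity
      positivity)]
  apply ENNReal.ofReal_le_ofReal
  obtain ⟨hI, hCS⟩ := aux_CS (2 * Real.pi * h) (by positivity) (𝓕 G)
  rw [SchwartzMap.integral_norm_sq_fourier] at hCS
  have hpt : ∀ ξ, ‖𝓕 g ξ‖ ≤ h ^ (-(2 * k : ℝ)) * (auxW ((2 * Real.pi * h) • ξ) * ‖𝓕 G ξ‖) := by
    intro ξ
    refine (hgb ξ).trans ?_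
    rw [hGb, auxW, ← mul_assoc, ← mul_assoc]
    gcongr
    set t := ‖(2 * Real.pi * h) • ξ‖ with ht
    have ht' : t = 2 * Real.pi * h * ‖ξ‖ := by
      rw [ht, norm_smul, Real.norm_of_nonneg (by positivity)]
    have hs : 2 * Real.pi * ‖ξ‖ = h⁻¹ * t := by rw [ht']; field_simp
    have ht0 : 0 ≤ t := norm_nonneg _
    have e1 : h ^ (-(2 * k : ℝ)) = h⁻¹ ^ (2 * k) := by
      rw [Real.rpow_neg h0.le, inv_pow, ← Real.rpow_natCast]; push_cast; rfl
    have e2 : ((1 + t ^ 2) ^ (n / 4 + 1))⁻¹ * (1 + t ^ 2) ^ (k + n / 4 + 1) = (1 + t ^ 2) ^ k := by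
      rw [add_assoc, pow_add _ k, mul_comm, mul_assoc, mul_inv_cancel₀ (by positivity), mul_one]
    rw [mul_assoc (h ^ _), e2, e1, hs, mul_pow]
    have e3 : t ^ (∑ i, α i) ≤ (1 + t ^ 2) ^ k := by
      rcases le_total t 1 with h' | h'
      · exact (pow_le_one₀ ht0 h').trans (one_le_pow₀ (by nlinarith))
      · refine (pow_le_pow_right₀ h' hα).trans ?_
        rw [pow_mul]
        exact pow_le_pow_left₀ (by positivity) (by linarith) _
    have e4 : h⁻¹ ^ (∑ i, α i) ≤ h⁻¹ ^ (2 * k) :=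
      pow_le_pow_right₀ ((one_le_inv₀ h0).2 h1) hα
    gcongr
  calc ‖g x‖ ≤ ∫ ξ, ‖𝓕 g ξ‖ := aux_sup g x
    _ ≤ ∫ ξ, h ^ (-(2 * k : ℝ)) * (auxW ((2 * Real.pi * h) • ξ) * ‖𝓕 G ξ‖) :=
        integral_mono (𝓕 g).integrable.norm (hI.const_mul _) hpt
    _ ≤ _ := by
        rw [integral_const_mul]
        refine (mul_le_mul_of_nonneg_left hCS (by positivity)).trans (le_of_eq ?_)
        rw [Real.mul_rpow (by positivity) h0.le, sub_eq_add_neg, Real.rpow_add h0]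
        simp only [ENNReal.toReal_ofNat, Real.rpow_two, neg_div, one_div]
        ring

theorem aux_main_ex (n k : ℕ) : ∃ A : ℝ, 0 ≤ A ∧
    ∀ (f : SchwartzMap (EuclideanSpace ℝ (Fin n)) ℂ) (h : ℝ), 0 < h → h ≤ 1 →
      ∃ L : ℝ, 0 ≤ L ∧ eLpNorm ((helmholtzOp h)^[k + n / 4 + 1] ⇑f) 2
              (volume : Measure (EuclideanSpace ℝ (Fin n))) = ENNReal.ofReal L ∧
      ∀ (α : Fin n → ℕ), ∑ i, α i ≤ 2 * k → ∀ x,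
        ‖mderivE α ⇑f x‖ ≤ A * h ^ (-(2 * k : ℝ) - (n : ℝ) / 2) * L := by
  have hpi := Real.pi_pos
  have h0 : 0 ≤ ∫ ξ : EuclideanSpace ℝ (Fin n), auxW ξ ^ 2 := integral_nonneg fun ξ => by positivity
  have hA0 : 0 ≤ (2 * Real.pi) ^ (-(n:ℝ) / 2) *
        (∫ ξ : EuclideanSpace ℝ (Fin n), auxW ξ ^ 2) ^ (1/2 : ℝ) := by positivity
  refine ⟨_, hA0, fun f h h0 h1 => ?_⟩
  obtain ⟨G, hG, -⟩ := aux_helm_iter h (k + n / 4 + 1) f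
  have hfin : eLpNorm ((helmholtzOp h)^[k + n / 4 + 1] ⇑f) 2
      (volume : Measure (EuclideanSpace ℝ (Fin n))) ≠ ⊤ := by
    rw [← hG]; exact (G.memLp 2 volume).2.ne
  have hL := ENNReal.ofReal_toReal hfin
  refine ⟨_, ENNReal.toReal_nonneg, hL.symm, fun α hα x => ?_⟩
  have key := aux_main (k := k) f h h0 h1 α hα x
  rw [← hL, ← ENNReal.ofReal_mul (mul_nonneg hA0 (Real.rpow_nonneg h0.le _))] at key
  exact (ENNReal.ofReal_le_ofReal_iff (mul_nonneg (mul_nonneg hA0 (Real.rpow_nonneg h0.le _))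
    ENNReal.toReal_nonneg)).1 key

/-- free semiclassical elliptic estimate
`‖f‖_{C^{2k}} ≤ C ħ^{−2k−n/2} ‖(1 − ħ²Δ)^{k+⌊n/4⌋+1} f‖_{L²}` for Schwartz `f`. -/
theorem elliptic_estimate_free
    (n : ℕ) (hn : 1 ≤ n) (k : ℕ) :
    ∃ C : ℝ, 0 < C ∧
      ∀ f : SchwartzMap (EuclideanSpace ℝ (Fin n)) ℂ,
      ∀ hbar ∈ Set.Ioc (0 : ℝ) 1,
        ENNReal.ofReal (CkNorm (2 * k) ⇑f) ≤
          ENNReal.ofReal (C * hbar ^ (-(2 * k : ℝ) - (n : ℝ) / 2)) *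
            eLpNorm ((helmholtzOp hbar)^[k + n / 4 + 1] ⇑f) 2
              (volume : Measure (EuclideanSpace ℝ (Fin n))) := by
  obtain ⟨A, hA0, key⟩ := aux_main_ex n k
  obtain ⟨N, hN⟩ : ∃ N : ℝ, N = ∑ j ∈ Finset.range (2 * k + 1), ∑ α ∈ multiIndices n j, (1:ℝ) :=
    ⟨_, rfl⟩
  have hN0 : 0 ≤ N := hN ▸ Finset.sum_nonneg fun _ _ => Finset.sum_nonneg fun _ _ => zero_le_one
  refine ⟨N * A + 1, by positivity, fun f h hh => ?_⟩
  obtain ⟨h0, h1⟩ := hh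
  obtain ⟨L, hL0, hL, key⟩ := key f h h0 h1
  have hH0 : 0 ≤ h ^ (-(2 * k : ℝ) - (n : ℝ) / 2) := Real.rpow_nonneg h0.le _
  rw [hL]
  generalize h ^ (-(2 * k : ℝ) - (n : ℝ) / 2) = H at key hH0 ⊢
  rw [← ENNReal.ofReal_mul (by positivity)]
  apply ENNReal.ofReal_le_ofReal
  unfold CkNorm
  refine ciSup_le fun x => ?_
  calc _ ≤ ∑ j ∈ Finset.range (2 * k + 1), ∑ α ∈ multiIndices n j, (A * H * L * 1) := by
        refine Finset.sum_le_sum fun j hj => Finset.sum_le_sum fun α hα => ?_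
        have hs : ∑ i, α i = j := (Finset.mem_filter.1 hα).2
        have hj' := Finset.mem_range.1 hj
        rw [mul_one]
        exact key α (by omega) x
    _ = A * H * L * N := by simp only [hN, Finset.mul_sum]
    _ ≤ (N * A + 1) * H * L := by
        have : 0 ≤ H * L := by positivity
        nlinarith
end

section
/- Let n ≥ 1, let Ω ⊂ ℝⁿ be a bounded open set, and let V : ℝⁿ → ℝ satisfy V(x) ≥ 1 for all x and be C^∞ on an open neighborhood of the closure of Ω. Then for every k ∈ ℕ there exists a constant C_k > 0 such that for every C^∞ function f : ℝⁿ → ℂ with compact support contained in Ω and every ħ ∈ (0,1]: ‖ (1 − ħ²Δ)^k f ‖_{L²(ℝⁿ)} ≤ C_k · ‖ (V − ħ²Δ)^k f ‖_{L²(ℝⁿ)}. -/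
open MeasureTheory
open scoped ENNReal

/-- The map `f ↦ (V − ħ²Δ) f`. -/
noncomputable def schrodingerOp {n : ℕ} (hbar : ℝ)
    (V : EuclideanSpace ℝ (Fin n) → ℝ)
    (f : EuclideanSpace ℝ (Fin n) → ℂ) : EuclideanSpace ℝ (Fin n) → ℂ :=
  fun x => V x • f x - (hbar ^ 2 : ℝ) • laplacianC f x

namespace HS

abbrev E (n : ℕ) := EuclideanSpace ℝ (Fin n)

/-- test functions -/
def D (n : ℕ) : Submodule ℂ (E n → ℂ) where
  carrier := {f | ContDiff ℝ (⊤ : ℕ∞) f ∧ HasCompactSupport f}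
  add_mem' := fun ha hb => ⟨ha.1.add hb.1, ha.2.add hb.2⟩
  zero_mem' := ⟨contDiff_const, HasCompactSupport.zero⟩
  smul_mem' := fun c f hf => ⟨hf.1.const_smul c, hf.2.smul_left (f := fun _ => c)⟩

variable {n : ℕ}

lemma D.smooth (f : D n) : ContDiff ℝ (⊤ : ℕ∞) (f : E n → ℂ) := f.2.1
lemma D.cpt (f : D n) : HasCompactSupport (f : E n → ℂ) := f.2.2
lemma D.diff (f : D n) : Differentiable ℝ (f : E n → ℂ) := f.2.1.differentiable (by simp)
lemma D.cont (f : D n) : Continuous (f : E n → ℂ) := f.2.1.continuous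

noncomputable def P (i : Fin n) : D n →ₗ[ℂ] D n where
  toFun f := ⟨fun x => fderiv ℝ (f : E n → ℂ) x (EuclideanSpace.single i 1),
    ((D.smooth f).fderiv_right (by simp)).clm_apply contDiff_const, (D.cpt f).fderiv_apply ℝ _⟩
  map_add' f g := by
    ext x
    simp [fderiv_add ((D.diff f) x) ((D.diff g) x)]
  map_smul' c f := by
    ext x
    simp [fderiv_const_smul ((D.diff f) x) c]

lemma P_apply (i : Fin n) (f : D n) (x : E n) :
    (P i f : E n → ℂ) x = fderiv ℝ (f : E n → ℂ) x (EuclideanSpace.single i 1) := rfl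

noncomputable def M (W : D n) : D n →ₗ[ℂ] D n where
  toFun f := ⟨fun x => (W : E n → ℂ) x * (f : E n → ℂ) x,
    (D.smooth W).mul (D.smooth f), (D.cpt f).mul_left⟩
  map_add' f g := by
    ext x
    simp [mul_add]
  map_smul' c f := by
    ext x
    simp [mul_left_comm]

lemma M_apply (W f : D n) (x : E n) :
    (M W f : E n → ℂ) x = (W : E n → ℂ) x * (f : E n → ℂ) x := rfl

lemma P_comm (i j : Fin n) (f : D n) : P i (P j f) = P j (P i f) := by
  ext x
  have hs : IsSymmSndFDerivAt ℝ (f : E n → ℂ) x :=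
    (D.smooth f).contDiffAt.isSymmSndFDerivAt (by
      rw [minSmoothness_of_isRCLikeNormedField]
      exact WithTop.coe_le_coe.2 (le_top (a := (2 : ℕ∞))))
  have hd : DifferentiableAt ℝ (fderiv ℝ (f : E n → ℂ)) x :=
    ((D.smooth f).fderiv_right (m := (⊤ : ℕ∞)) (by simp)).differentiable (by simp) x
  have key : ∀ a b : Fin n, (P a (P b f) : E n → ℂ) x =
      fderiv ℝ (fderiv ℝ (f : E n → ℂ)) x (EuclideanSpace.single a 1)
        (EuclideanSpace.single b 1) := by
    intro a b
    rw [P_apply]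
    have : ((P b f : D n) : E n → ℂ) =
      fun y => fderiv ℝ (f : E n → ℂ) y (EuclideanSpace.single b 1) := rfl
    rw [this, fderiv_clm_apply hd (differentiableAt_const _)]
    simp
  rw [key, key]
  exact hs _ _

lemma P_mul (i : Fin n) (W f : D n) : P i (M W f) = M (P i W) f + M W (P i f) := by
  ext x
  have : ((M W f : D n) : E n → ℂ) = (W : E n → ℂ) * (f : E n → ℂ) := rfl
  rw [P_apply, this, fderiv_mul ((D.diff W) x) ((D.diff f) x)]
  simp [M_apply, P_apply]
  ring

noncomputable def L : D n →ₗ[ℂ] D n := ∑ i : Fin n, P i ∘ₗ P i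

lemma L_eq (f : D n) : L f = ∑ i : Fin n, P i (P i f) := by simp [L]

lemma L_apply (f : D n) (x : E n) : (L f : E n → ℂ) x = laplacianC (f : E n → ℂ) x := by
  simp only [L_eq, laplacianC, Submodule.coe_sum, Finset.sum_apply]
  rfl

noncomputable def H (h : ℝ) : D n →ₗ[ℂ] D n := LinearMap.id - ((h ^ 2 : ℝ) : ℂ) • L

lemma H_eq (h : ℝ) (f : D n) : H h f = f - ((h ^ 2 : ℝ) : ℂ) • L f := rfl

lemma H_coe (h : ℝ) (f : D n) : (H h f : E n → ℂ) = helmholtzOp h (f : E n → ℂ) := by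
  ext x
  simp [H_eq, helmholtzOp, L_apply]

lemma P_H (i : Fin n) (h : ℝ) (f : D n) : P i (H h f) = H h (P i f) := by
  simp only [H_eq, L_eq, map_sub, map_smul, map_sum]
  congr 2
  refine Finset.sum_congr rfl fun j _ => ?_
  rw [P_comm i j, P_comm i j]

lemma P_H_pow (i : Fin n) (h : ℝ) (m : ℕ) (f : D n) :
    P i ((H h ^ m) f) = (H h ^ m) (P i f) := by
  induction m generalizing f with
  | zero => simp
  | succ m ih => rw [pow_succ, Module.End.mul_apply, ih, P_H, Module.End.mul_apply]

lemma H_M (h : ℝ) (W f : D n) : H h (M W f) = M W (H h f) - ((h ^ 2 : ℝ) : ℂ) • M (L W) f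
    - ∑ i, (2 * (h : ℂ)) • M (P i W) ((h : ℂ) • P i f) := by
  ext x
  simp only [H_eq, L_eq, P_mul, map_add, Finset.sum_add_distrib, map_sub, map_smul, map_sum,
    Submodule.coe_sub, Submodule.coe_smul, Submodule.coe_sum, Submodule.coe_add,
    Pi.sub_apply, Pi.smul_apply, Pi.add_apply, Finset.sum_apply, M_apply, smul_eq_mul]
  simp only [← Finset.mul_sum, ← Finset.sum_mul]
  push_cast
  ring

/-! norm -/

lemma memLp (f : D n) : MemLp (f : E n → ℂ) 2 volume :=
  (D.cont f).memLp_of_hasCompactSupport (D.cpt f)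

noncomputable def N : Seminorm ℂ (D n) :=
  Seminorm.of (fun f => (eLpNorm (f : E n → ℂ) 2 volume).toReal)
    (fun f g => by
      rw [← ENNReal.toReal_add (memLp f).2.ne (memLp g).2.ne]
      refine ENNReal.toReal_mono (ENNReal.add_ne_top.2 ⟨(memLp f).2.ne, (memLp g).2.ne⟩) ?_
      exact eLpNorm_add_le (memLp f).1 (memLp g).1 (by norm_num))
    (fun c f => by
      have := eLpNorm_const_smul c (f : E n → ℂ) 2 volume
      simp only [Submodule.coe_smul, this, ENNReal.toReal_mul]
      simp)

lemma N_def (f : D n) : N f = (eLpNorm (f : E n → ℂ) 2 volume).toReal := rfl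

lemma N_ofReal (f : D n) : eLpNorm (f : E n → ℂ) 2 volume = ENNReal.ofReal (N f) := by
  rw [N_def, ENNReal.ofReal_toReal (memLp f).2.ne]

lemma N_sq (f : D n) : N f ^ 2 = ∫ x, ‖(f : E n → ℂ) x‖ ^ 2 := by
  have h := (memLp f).eLpNorm_eq_integral_rpow_norm (by norm_num) (by norm_num)
  have h0 : 0 ≤ ∫ x, ‖(f : E n → ℂ) x‖ ^ 2 := integral_nonneg fun x => by positivity
  rw [N_def, h, ENNReal.toReal_ofReal (by positivity)]
  simp only [ENNReal.toReal_ofNat, Real.rpow_ofNat]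
  rw [← Real.rpow_natCast, ← Real.rpow_mul h0]
  norm_num

lemma N_M (W : D n) : ∃ C : ℝ, 0 ≤ C ∧ ∀ f : D n, N (M W f) ≤ C * N f := by
  obtain ⟨C, hC⟩ := (D.cpt W).exists_bound_of_continuous (D.cont W)
  have hC0 : 0 ≤ C := (norm_nonneg _).trans (hC 0)
  refine ⟨C, hC0, fun f => ?_⟩
  have : eLpNorm (M W f : E n → ℂ) 2 volume ≤ ENNReal.ofReal C * eLpNorm (f : E n → ℂ) 2 volume := by
    refine eLpNorm_le_mul_eLpNorm_of_ae_le_mul (Filter.Eventually.of_forall fun x => ?_) 2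
    rw [M_apply, norm_mul]
    exact mul_le_mul_of_nonneg_right (hC x) (norm_nonneg _)
  rw [N_ofReal, N_ofReal, ← ENNReal.ofReal_mul hC0] at this
  exact (ENNReal.ofReal_le_ofReal_iff (by positivity)).1 this

lemma integ (f g : D n) :
    Integrable (fun x => inner ℝ ((f : E n → ℂ) x) ((g : E n → ℂ) x)) volume := by
  refine ((D.cont f).inner (D.cont g)).integrable_of_hasCompactSupport ?_
  refine (D.cpt f).mono fun x hx => ?_
  contrapose! hx
  simp only [Function.mem_support, not_not] at hx ⊢
  simp [hx]

lemma ibp (i : Fin n) (f : D n) :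
    ∫ x, inner ℝ ((f : E n → ℂ) x) ((P i (P i f) : E n → ℂ) x) = - N (P i f) ^ 2 := by
  rw [N_sq]
  have := integral_bilinear_fderiv_right_eq_neg_left_of_integrable (μ := (volume : Measure (E n)))
    (f := (f : E n → ℂ)) (g := (P i f : E n → ℂ)) (v := EuclideanSpace.single i 1)
    (B := innerSL ℝ) (integ (P i f) (P i f)) (integ f (P i (P i f))) (integ f (P i f))
    (fun x _ => (D.diff f) x) (fun x _ => D.diff (P i f) x)
  refine this.trans ?_
  congr 1
  refine integral_congr_ae (Filter.Eventually.of_forall fun x => ?_)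
  exact real_inner_self_eq_norm_sq ((P i f : E n → ℂ) x)

lemma ibpL (f : D n) :
    ∫ x, inner ℝ ((f : E n → ℂ) x) ((L f : E n → ℂ) x) = - ∑ i, N (P i f) ^ 2 := by
  simp only [L_eq, Submodule.coe_sum, Finset.sum_apply, inner_sum]
  rw [integral_finsetSum _ fun i _ => integ f (P i (P i f))]
  simp only [ibp, Finset.sum_neg_distrib]

/-- energy inequality -/
lemma energy (h : ℝ) (W g : D n)
    (hW : ∀ x, ∃ v : ℝ, 0 ≤ v ∧ (W : E n → ℂ) x * (g : E n → ℂ) x = ((-v : ℝ) : ℂ) * (g : E n → ℂ) x) :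
    N g ^ 2 + 2 * (h ^ 2 * ∑ i, N (P i g) ^ 2) ≤ N (H h g - M W g) ^ 2 := by
  set A := H h g - M W g with hA
  have e1 : ∫ x, (inner ℝ ((g : E n → ℂ) x) ((g : E n → ℂ) x) -
      h ^ 2 * inner ℝ ((g : E n → ℂ) x) ((L g : E n → ℂ) x)) =
      N g ^ 2 + h ^ 2 * ∑ i, N (P i g) ^ 2 := by
    rw [integral_sub (integ g g) ((integ g (L g)).const_mul _), integral_const_mul, ibpL, N_sq]
    simp only [real_inner_self_eq_norm_sq]
    ring
  have e2 : ∫ x, (inner ℝ ((g : E n → ℂ) x) ((g : E n → ℂ) x) / 2 +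
      inner ℝ ((A : E n → ℂ) x) ((A : E n → ℂ) x) / 2) = N g ^ 2 / 2 + N A ^ 2 / 2 := by
    rw [integral_add ((integ g g).div_const _) ((integ A A).div_const _), integral_div,
      integral_div, N_sq, N_sq]
    simp only [real_inner_self_eq_norm_sq]
  have e3 := integral_mono (μ := (volume : Measure (E n)))
    ((integ g g).sub ((integ g (L g)).const_mul (h ^ 2)))
    (((integ g g).div_const 2).add ((integ A A).div_const 2)) (fun x => by
      obtain ⟨v, hv, hx⟩ := hW x
      have hAx : (A : E n → ℂ) x = (g : E n → ℂ) x - (h ^ 2 : ℝ) • (L g : E n → ℂ) x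
          + v • (g : E n → ℂ) x := by
        rw [hA]
        simp only [H_eq, Submodule.coe_sub, Submodule.coe_smul, Pi.sub_apply, Pi.smul_apply,
          M_apply, hx, smul_eq_mul, Complex.real_smul]
        push_cast
        ring
      have i1 : inner ℝ ((g : E n → ℂ) x) ((A : E n → ℂ) x) =
        inner ℝ ((g : E n → ℂ) x) ((g : E n → ℂ) x) -
          h ^ 2 * inner ℝ ((g : E n → ℂ) x) ((L g : E n → ℂ) x)
          + v * inner ℝ ((g : E n → ℂ) x) ((g : E n → ℂ) x) := by
        rw [hAx, inner_add_right, inner_sub_right, inner_smul_right_eq_smul,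
          inner_smul_right_eq_smul]
        simp only [smul_eq_mul]
      have i2 := real_inner_self_nonneg (x := (g : E n → ℂ) x - (A : E n → ℂ) x)
      rw [real_inner_sub_sub_self] at i2
      have i3 := mul_nonneg hv (real_inner_self_nonneg (x := (g : E n → ℂ) x))
      simp only [Pi.sub_apply, Pi.add_apply]
      linarith)
  simp only [Pi.sub_apply, Pi.add_apply] at e3
  rw [e1, e2] at e3
  linarith

lemma M_zero (g : D n) : M 0 g = 0 := by
  ext x
  simp [M_apply]

lemma energyH (h : ℝ) (g : D n) :
    N g ^ 2 + 2 * (h ^ 2 * ∑ i, N (P i g) ^ 2) ≤ N (H h g) ^ 2 := by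
  have := energy h 0 g (fun x => ⟨0, le_rfl, by simp⟩)
  simpa [M_zero] using this

lemma N_le_H (h : ℝ) (g : D n) : N g ≤ N (H h g) := by
  have := energyH h g
  have h2 : 0 ≤ h ^ 2 * ∑ i, N (P i g) ^ 2 :=
    mul_nonneg (sq_nonneg _) (Finset.sum_nonneg fun i _ => sq_nonneg _)
  exact (sq_le_sq₀ (by positivity) (by positivity)).1 (by linarith)

lemma NP_le_H (h : ℝ) (i : Fin n) (g : D n) : N ((h : ℂ) • P i g) ≤ N (H h g) := by
  have := energyH h g
  have h2 : N (P i g) ^ 2 ≤ ∑ i, N (P i g) ^ 2 :=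
    Finset.single_le_sum (f := fun i => N (P i g) ^ 2) (fun i _ => by positivity)
      (Finset.mem_univ i)
  have h3 : h ^ 2 * N (P i g) ^ 2 ≤ h ^ 2 * ∑ i, N (P i g) ^ 2 := by gcongr
  have h4 : 0 ≤ h ^ 2 * N (P i g) ^ 2 := by positivity
  refine (sq_le_sq₀ (by positivity) (by positivity)).1 ?_
  rw [map_smul_eq_mul, mul_pow]
  simp only [Complex.norm_real, Real.norm_eq_abs, sq_abs]
  nlinarith [sq_nonneg (N g)]

lemma N_sum {ι : Type*} (s : Finset ι) (f : ι → D n) : N (∑ i ∈ s, f i) ≤ ∑ i ∈ s, N (f i) :=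
  Finset.le_sum_of_subadditive _ (map_zero N).le (map_add_le_add _) _ _

lemma mult (m : ℕ) : ∀ W : D n, ∃ C : ℝ, 0 ≤ C ∧ ∀ f : D n, ∀ h ∈ Set.Ioc (0 : ℝ) 1,
    N ((H h ^ m) (M W f)) ≤ C * N ((H h ^ m) f) := by
  induction m with
  | zero =>
    intro W
    obtain ⟨C, hC, hf⟩ := N_M W
    exact ⟨C, hC, fun f h _ => by simpa using hf f⟩
  | succ m ih =>
    intro W
    obtain ⟨C1, hC1, h1⟩ := ih W
    obtain ⟨C2, hC2, h2⟩ := ih (L W)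
    choose C3 hC3 h3 using fun i => ih (P i W)
    refine ⟨C1 + C2 + ∑ i, 2 * C3 i, add_nonneg (by positivity)
      (Finset.sum_nonneg fun i _ => mul_nonneg zero_le_two (hC3 i)), fun f h hh => ?_⟩
    have hs : (H h ^ (m + 1)) f = (H h) ((H h ^ m) f) := by
      rw [pow_succ', Module.End.mul_apply]
    have hs' : (H h ^ (m + 1)) f = (H h ^ m) (H h f) := by
      rw [pow_succ, Module.End.mul_apply]
    have hh0 := hh.1.le
    have hh1 := hh.2
    have hsq : h ^ 2 ≤ 1 := pow_le_one₀ hh0 hh1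
    set R := N ((H h ^ (m + 1)) f) with hR
    have hR0 : 0 ≤ R := by positivity
    have a1 : N ((H h ^ m) (M W (H h f))) ≤ C1 * R := by
      rw [hR, hs']
      exact h1 _ h hh
    have a2 : N (((h ^ 2 : ℝ) : ℂ) • (H h ^ m) (M (L W) f)) ≤ C2 * R := by
      rw [map_smul_eq_mul, Complex.norm_real, Real.norm_of_nonneg (by positivity)]
      have b := h2 f h hh
      have c : N ((H h ^ m) f) ≤ R := by
        rw [hR, hs]
        exact N_le_H _ _
      calc h ^ 2 * N ((H h ^ m) (M (L W) f)) ≤ 1 * N ((H h ^ m) (M (L W) f)) := by gcongr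
        _ ≤ C2 * N ((H h ^ m) f) := by linarith
        _ ≤ C2 * R := by gcongr
    have a3 : ∀ i, N ((2 * (h : ℂ)) • (H h ^ m) (M (P i W) ((h : ℂ) • P i f))) ≤
        2 * C3 i * R := by
      intro i
      rw [map_smul_eq_mul, norm_mul, Complex.norm_real, Real.norm_of_nonneg hh0]
      have b := h3 i ((h : ℂ) • P i f) h hh
      have c : N ((H h ^ m) ((h : ℂ) • P i f)) ≤ R := by
        rw [hR, hs, map_smul, ← P_H_pow]
        exact NP_le_H _ _ _
      have d : C3 i * N ((H h ^ m) ((h : ℂ) • P i f)) ≤ C3 i * R :=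
        mul_le_mul_of_nonneg_left c (hC3 i)
      have e : h * N ((H h ^ m) (M (P i W) ((h : ℂ) • P i f))) ≤
          1 * N ((H h ^ m) (M (P i W) ((h : ℂ) • P i f))) := by gcongr
      simp only [Complex.norm_ofNat]
      linarith
    have e : (H h ^ (m + 1)) (M W f) = (H h ^ m) (M W (H h f))
        - ((h ^ 2 : ℝ) : ℂ) • (H h ^ m) (M (L W) f)
        - ∑ i, (2 * (h : ℂ)) • (H h ^ m) (M (P i W) ((h : ℂ) • P i f)) := by
      rw [pow_succ, Module.End.mul_apply, H_M]
      simp only [map_sub, map_smul, map_sum]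
    rw [e]
    have t1 := map_sub_le_add N ((H h ^ m) (M W (H h f))
        - ((h ^ 2 : ℝ) : ℂ) • (H h ^ m) (M (L W) f))
        (∑ i, (2 * (h : ℂ)) • (H h ^ m) (M (P i W) ((h : ℂ) • P i f)))
    have t2 := map_sub_le_add N ((H h ^ m) (M W (H h f)))
        (((h ^ 2 : ℝ) : ℂ) • (H h ^ m) (M (L W) f))
    have t3 := (N_sum Finset.univ
      (fun i => (2 * (h : ℂ)) • (H h ^ m) (M (P i W) ((h : ℂ) • P i f)))).trans
      (Finset.sum_le_sum fun i _ => a3 i)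
    rw [← Finset.sum_mul] at t3
    linarith

/-- functions supported in `K` -/
def TS (K : Set (E n)) : Submodule ℂ (D n) where
  carrier := {f | tsupport (f : E n → ℂ) ⊆ K}
  add_mem' := fun {a b} ha hb => (tsupport_add (a : E n → ℂ) (b : E n → ℂ)).trans
    (Set.union_subset ha hb)
  zero_mem' := by simp [tsupport]
  smul_mem' := fun c f hf =>
    (tsupport_smul_subset_right (fun _ => c) (f : E n → ℂ)).trans hf

lemma TS_P {K : Set (E n)} (i : Fin n) {f : D n} (hf : f ∈ TS K) : P i f ∈ TS K :=
  (tsupport_fderiv_apply_subset ℝ _).trans hf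

lemma TS_M {K : Set (E n)} (W : D n) {f : D n} (hf : f ∈ TS K) : M W f ∈ TS K :=
  tsupport_mul_subset_right.trans hf

lemma TS_H {K : Set (E n)} (h : ℝ) {f : D n} (hf : f ∈ TS K) : H h f ∈ TS K := by
  rw [H_eq, L_eq]
  exact sub_mem hf (Submodule.smul_mem _ _ (sum_mem fun i _ => TS_P i (TS_P i hf)))

noncomputable def A (h : ℝ) (W : D n) : D n →ₗ[ℂ] D n := H h - M W

lemma A_eq (h : ℝ) (W f : D n) : A h W f = H h f - M W f := rfl

lemma TS_A {K : Set (E n)} (h : ℝ) (W : D n) {f : D n} (hf : f ∈ TS K) : A h W f ∈ TS K :=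
  sub_mem (TS_H h hf) (TS_M W hf)

lemma TS_A_pow {K : Set (E n)} (h : ℝ) (W : D n) (k : ℕ) {f : D n} (hf : f ∈ TS K) :
    (A h W ^ k) f ∈ TS K := by
  induction k with
  | zero => simpa using hf
  | succ k ih =>
    rw [pow_succ', Module.End.mul_apply]
    exact TS_A h W ih

lemma zero_of_TS {K : Set (E n)} {f : D n} (hf : f ∈ TS K) {x : E n} (hx : x ∉ K) :
    (f : E n → ℂ) x = 0 :=
  image_eq_zero_of_notMem_tsupport fun h => hx (hf h)

lemma N_le_A {K : Set (E n)} (h : ℝ) (W : D n) (V : E n → ℝ) (hV : ∀ x, 1 ≤ V x)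
    (hW : ∀ x ∈ K, (W : E n → ℂ) x = ((1 - V x : ℝ) : ℂ)) {g : D n} (hg : g ∈ TS K) :
    N g ≤ N (A h W g) := by
  have := energy h W g (fun x => ⟨V x - 1, by linarith [hV x], by
    by_cases hx : x ∈ K
    · rw [hW x hx]
      push_cast
      ring
    · simp [zero_of_TS hg hx]⟩)
  have h2 : 0 ≤ h ^ 2 * ∑ i, N (P i g) ^ 2 :=
    mul_nonneg (sq_nonneg _) (Finset.sum_nonneg fun i _ => sq_nonneg _)
  exact (sq_le_sq₀ (by positivity) (by positivity)).1 (by rw [A_eq]; linarith)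

lemma main {K : Set (E n)} (W : D n) (V : E n → ℝ) (hV : ∀ x, 1 ≤ V x)
    (hW : ∀ x ∈ K, (W : E n → ℂ) x = ((1 - V x : ℝ) : ℂ)) (k : ℕ) :
    ∃ C : ℝ, 0 < C ∧ ∀ f ∈ TS K, ∀ h ∈ Set.Ioc (0 : ℝ) 1,
      N ((H h ^ k) f) ≤ C * N ((A h W ^ k) f) := by
  induction k with
  | zero => exact ⟨1, one_pos, fun f _ h _ => by simp⟩
  | succ k ih =>
    obtain ⟨C, hC, hf⟩ := ih
    obtain ⟨C', hC', hf'⟩ := mult k W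
    refine ⟨C + C' * C, by positivity, fun f hfK h hh => ?_⟩
    have e : (H h ^ (k + 1)) f = (H h ^ k) (A h W f) + (H h ^ k) (M W f) := by
      rw [pow_succ, Module.End.mul_apply, ← map_add, A_eq, sub_add_cancel]
    have e1 : (A h W ^ (k + 1)) f = (A h W ^ k) (A h W f) := by
      rw [pow_succ, Module.End.mul_apply]
    have e2 : (A h W ^ (k + 1)) f = A h W ((A h W ^ k) f) := by
      rw [pow_succ', Module.End.mul_apply]
    have a1 := hf _ (TS_A h W hfK) h hh
    rw [← e1] at a1
    have a2 := hf' f h hh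
    have a3 := hf f hfK h hh
    have a4 := N_le_A h W V hV hW (TS_A_pow h W k hfK)
    rw [← e2] at a4
    rw [e]
    calc _ ≤ _ := map_add_le_add N _ _
      _ ≤ C * N ((A h W ^ (k + 1)) f) + C' * (C * N ((A h W ^ (k + 1)) f)) := by
        refine add_le_add a1 (a2.trans ?_)
        gcongr
        exact a3.trans (by gcongr)
      _ = _ := by ring

lemma H_iter (h : ℝ) (k : ℕ) (f : D n) :
    (((H h ^ k) f : D n) : E n → ℂ) = (helmholtzOp h)^[k] (f : E n → ℂ) := by
  induction k with
  | zero => simp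
  | succ k ih => rw [pow_succ', Module.End.mul_apply, H_coe, ih, Function.iterate_succ_apply']

lemma A_iter {K : Set (E n)} (h : ℝ) (W : D n) (V : E n → ℝ)
    (hW : ∀ x ∈ K, (W : E n → ℂ) x = ((1 - V x : ℝ) : ℂ)) (k : ℕ) {f : D n} (hf : f ∈ TS K) :
    (((A h W ^ k) f : D n) : E n → ℂ) = (schrodingerOp h V)^[k] (f : E n → ℂ) := by
  induction k with
  | zero => simp
  | succ k ih =>
    rw [pow_succ', Module.End.mul_apply, Function.iterate_succ_apply', ← ih]
    have hg := TS_A_pow h W k hf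
    set g := (A h W ^ k) f
    ext x
    have h0 : (W : E n → ℂ) x * (g : E n → ℂ) x = ((1 - V x : ℝ) : ℂ) * (g : E n → ℂ) x := by
      by_cases hx : x ∈ K
      · rw [hW x hx]
      · simp [zero_of_TS hg hx]
    simp only [A_eq, H_eq, Submodule.coe_sub, Submodule.coe_smul, Pi.sub_apply, Pi.smul_apply,
      M_apply, h0, schrodingerOp, L_apply, smul_eq_mul, Complex.real_smul]
    push_cast
    ring

open scoped Manifold in
lemma exists_W (Ω : Set (E n)) (hΩbd : Bornology.IsBounded Ω) (V : E n → ℝ)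
    (U : Set (E n)) (hUopen : IsOpen U) (hclosure : closure Ω ⊆ U)
    (hVsmooth : ContDiffOn ℝ (⊤ : ℕ∞) V U) :
    ∃ W : D n, ∀ x ∈ Ω, (W : E n → ℂ) x = ((1 - V x : ℝ) : ℂ) := by
  obtain ⟨K, hK, hΩK, hKU⟩ := exists_compact_between hΩbd.isCompact_closure hUopen hclosure
  obtain ⟨χ, h1, h0, -⟩ := exists_contMDiffMap_one_nhds_of_subset_interior (n := (⊤ : ℕ∞))
    𝓘(ℝ, E n) isClosed_closure hΩK
  have hχ : ContDiff ℝ (⊤ : ℕ∞) (χ : E n → ℝ) := χ.contMDiff.contDiff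
  refine ⟨⟨fun x => ((χ x * (1 - V x) : ℝ) : ℂ), ?_, ?_⟩, fun x hx => ?_⟩
  · rw [contDiff_iff_contDiffAt]
    intro x
    by_cases hx : x ∈ U
    · have hVx := hVsmooth.contDiffAt (hUopen.mem_nhds hx)
      exact Complex.ofRealCLM.contDiff.contDiffAt.comp x
        (hχ.contDiffAt.mul (contDiffAt_const.sub hVx))
    · have hxK : x ∈ Kᶜ := fun h => hx (hKU h)
      refine (contDiffAt_const (c := (0 : ℂ))).congr_of_eventuallyEq ?_
      filter_upwards [hK.isClosed.isOpen_compl.mem_nhds hxK] with y hy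
      simp [h0 y hy]
  · refine HasCompactSupport.intro hK fun x hx => ?_
    simp [h0 x hx]
  · have := h1.self_of_nhdsSet x (subset_closure hx)
    simp [this]

end HS

/-- comparison of iterated semiclassical operators
`‖(1 − ħ²Δ)^k f‖_{L²} ≤ C_k ‖(V − ħ²Δ)^k f‖_{L²}` for smooth `f` compactly supported
in a bounded open set `Ω` on a neighborhood of whose closure `V ≥ 1` is smooth. -/
theorem helmholtz_schrodinger_comparison
    (n : ℕ) (hn : 1 ≤ n)
    (Ω : Set (EuclideanSpace ℝ (Fin n)))
    (hΩopen : IsOpen Ω) (hΩbd : Bornology.IsBounded Ω)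
    (V : EuclideanSpace ℝ (Fin n) → ℝ)
    (hV1 : ∀ x, 1 ≤ V x)
    (U : Set (EuclideanSpace ℝ (Fin n)))
    (hUopen : IsOpen U) (hclosure : closure Ω ⊆ U)
    (hVsmooth : ContDiffOn ℝ (⊤ : ℕ∞) V U) :
    ∀ k : ℕ, ∃ C : ℝ, 0 < C ∧
      ∀ f : EuclideanSpace ℝ (Fin n) → ℂ,
        ContDiff ℝ (⊤ : ℕ∞) f → HasCompactSupport f → tsupport f ⊆ Ω →
        ∀ hbar ∈ Set.Ioc (0 : ℝ) 1,
          eLpNorm ((helmholtzOp hbar)^[k] f) 2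
              (volume : Measure (EuclideanSpace ℝ (Fin n))) ≤
            ENNReal.ofReal C *
              eLpNorm ((schrodingerOp hbar V)^[k] f) 2
                (volume : Measure (EuclideanSpace ℝ (Fin n))) := by
  intro k
  obtain ⟨W, hW⟩ := HS.exists_W Ω hΩbd V U hUopen hclosure hVsmooth
  obtain ⟨C, hC, hmain⟩ := HS.main W V hV1 hW k
  refine ⟨C, hC, fun f hf hfc hfΩ h hh => ?_⟩
  let g : HS.D n := ⟨f, hf, hfc⟩
  have hg : g ∈ HS.TS Ω := hfΩ
  have e1 : (helmholtzOp h)^[k] f = (((HS.H h ^ k) g : HS.D n) : HS.E n → ℂ) :=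
    (HS.H_iter h k g).symm
  have e2 : (schrodingerOp h V)^[k] f = (((HS.A h W ^ k) g : HS.D n) : HS.E n → ℂ) :=
    (HS.A_iter h W V hW k hg).symm
  rw [e1, e2, HS.N_ofReal, HS.N_ofReal, ← ENNReal.ofReal_mul hC.le]
  exact ENNReal.ofReal_le_ofReal (hmain g hg h hh)
end

section
/- Let n ≥ 1, let Ω ⊂ ℝⁿ be a bounded open set, and let V : ℝⁿ → ℝ satisfy V(x) ≥ 1 for all x and be C^∞ on an open neighborhood of the closure of Ω. Then for every k ∈ ℕ there exists a constant C_k > 0 (depending on V, Ω, k, n) such that for every C^∞ function f : ℝⁿ → ℂ with compact support contained in Ω and every ħ ∈ (0,1]: ‖f‖_{C^{2k}} ≤ C_k · ħ^{−2k − n/2} · ‖ (V − ħ²Δ)^{k + ⌊n/4⌋ + 1} f ‖_{L²(ℝⁿ)}. -/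
open MeasureTheory
open scoped ENNReal

namespace EllEst

open scoped SchwartzMap LineDeriv FourierTransform
open SchwartzMap Real

variable {n : ℕ}

/-- Coordinate derivative on Schwartz functions. -/
noncomputable def dS (i : Fin n) :
    𝓢(EuclideanSpace ℝ (Fin n), ℂ) →ₗ[ℂ] 𝓢(EuclideanSpace ℝ (Fin n), ℂ) :=
  (LineDeriv.lineDerivOpCLM ℂ 𝓢(EuclideanSpace ℝ (Fin n), ℂ)
    (EuclideanSpace.single i (1 : ℝ))).toLinearMap

/-- Laplacian on Schwartz functions. -/
noncomputable def lapS (n : ℕ) :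
    𝓢(EuclideanSpace ℝ (Fin n), ℂ) →ₗ[ℂ] 𝓢(EuclideanSpace ℝ (Fin n), ℂ) :=
  ∑ i : Fin n, dS i * dS i

/-- `1 - ħ²Δ` on Schwartz functions. -/
noncomputable def AS (n : ℕ) (h : ℝ) :
    Module.End ℂ 𝓢(EuclideanSpace ℝ (Fin n), ℂ) :=
  1 - ((h : ℂ) ^ 2) • lapS n

/-- Multiplication by a Schwartz function. -/
noncomputable def MS (g : 𝓢(EuclideanSpace ℝ (Fin n), ℂ)) :
    Module.End ℂ 𝓢(EuclideanSpace ℝ (Fin n), ℂ) :=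
  (smulLeftCLM ℂ (g : EuclideanSpace ℝ (Fin n) → ℂ)).toLinearMap

/-- The L² norm. -/
noncomputable def nrm (f : 𝓢(EuclideanSpace ℝ (Fin n), ℂ)) : ℝ := ‖f.toLp 2‖

lemma dS_apply (i : Fin n) (f : 𝓢(EuclideanSpace ℝ (Fin n), ℂ)) (x) :
    dS i f x = fderiv ℝ f x (EuclideanSpace.single i 1) := rfl

lemma MS_apply (g f : 𝓢(EuclideanSpace ℝ (Fin n), ℂ)) (x) :
    MS g f x = g x * f x := by
  simp [MS, smulLeftCLM_apply_apply g.hasTemperateGrowth]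

lemma sum_coe {ι : Type*} (s : Finset ι) (F : ι → 𝓢(EuclideanSpace ℝ (Fin n), ℂ)) (x) :
    (∑ i ∈ s, F i) x = ∑ i ∈ s, F i x := by
  simp

lemma lapS_eq (f : 𝓢(EuclideanSpace ℝ (Fin n), ℂ)) :
    lapS n f = ∑ i, dS i (dS i f) := by
  simp [lapS]

lemma lapS_apply (f : 𝓢(EuclideanSpace ℝ (Fin n), ℂ)) (x) :
    lapS n f x = laplacianC f x := by
  rw [lapS_eq, sum_coe]
  rfl

lemma AS_eq (h : ℝ) (f : 𝓢(EuclideanSpace ℝ (Fin n), ℂ)) :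
    AS n h f = f - ((h : ℂ) ^ 2) • lapS n f := by
  simp [AS]

lemma nrm_nonneg (f : 𝓢(EuclideanSpace ℝ (Fin n), ℂ)) : 0 ≤ nrm f := norm_nonneg _

lemma nrm_eq (f : 𝓢(EuclideanSpace ℝ (Fin n), ℂ)) :
    nrm f = ‖toLpCLM ℂ ℂ 2 volume f‖ := rfl

lemma nrm_add_le (f g : 𝓢(EuclideanSpace ℝ (Fin n), ℂ)) : nrm (f + g) ≤ nrm f + nrm g := by
  simp only [nrm_eq, map_add]
  exact norm_add_le _ _

lemma nrm_sub_le (f g : 𝓢(EuclideanSpace ℝ (Fin n), ℂ)) : nrm (f - g) ≤ nrm f + nrm g := by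
  simp only [nrm_eq, map_sub]
  exact norm_sub_le _ _

lemma nrm_smul (c : ℂ) (f : 𝓢(EuclideanSpace ℝ (Fin n), ℂ)) : nrm (c • f) = ‖c‖ * nrm f := by
  simp only [nrm_eq, map_smul]
  exact norm_smul _ _

lemma nrm_sum_le {ι : Type*} (s : Finset ι) (F : ι → 𝓢(EuclideanSpace ℝ (Fin n), ℂ)) :
    nrm (∑ i ∈ s, F i) ≤ ∑ i ∈ s, nrm (F i) := by
  simp only [nrm_eq, map_sum]
  exact norm_sum_le _ _

lemma nrm_mono {f g : 𝓢(EuclideanSpace ℝ (Fin n), ℂ)} (c : ℝ) (hfg : ∀ x, ‖f x‖ ≤ c * ‖g x‖) :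
    nrm f ≤ c * nrm g := by
  apply Lp.norm_le_mul_norm_of_ae_le_mul
  filter_upwards [f.coeFn_toLp 2 volume, g.coeFn_toLp 2 volume] with x h1 h2
  rw [h1, h2]
  exact hfg x

lemma nrm_fourier (f : 𝓢(EuclideanSpace ℝ (Fin n), ℂ)) : nrm (𝓕 f) = nrm f :=
  norm_fourier_toL2_eq f

lemma fourier_dS (i : Fin n) (f : 𝓢(EuclideanSpace ℝ (Fin n), ℂ)) (ξ) :
    𝓕 (dS i f) ξ = (2 * π * Complex.I * (ξ i : ℂ)) * 𝓕 f ξ := by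
  have := fourier_lineDerivOp_eq f (EuclideanSpace.single i (1 : ℝ))
  have h2 : (fun x : EuclideanSpace ℝ (Fin n) =>
    inner ℝ x (EuclideanSpace.single i (1 : ℝ))).HasTemperateGrowth := by fun_prop
  change 𝓕 (∂_{EuclideanSpace.single i (1 : ℝ)} f) ξ = _
  rw [this]
  rw [smul_apply, smulLeftCLM_apply_apply h2, EuclideanSpace.inner_single_right]
  simp
  ring

/-- Symbol of `1 - ħ²Δ`. -/
noncomputable def sym (h : ℝ) (ξ : EuclideanSpace ℝ (Fin n)) : ℝ := 1 + ‖(2 * π * h) • ξ‖ ^ 2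

lemma sym_eq (h : ℝ) (ξ : EuclideanSpace ℝ (Fin n)) :
    sym h ξ = 1 + (2 * π * h) ^ 2 * ∑ i, ξ i ^ 2 := by
  rw [sym, norm_smul, mul_pow, EuclideanSpace.norm_sq_eq, norm_eq_abs, sq_abs]
  simp only [norm_eq_abs, sq_abs]

lemma one_le_sym (h : ℝ) (ξ : EuclideanSpace ℝ (Fin n)) : 1 ≤ sym h ξ := by
  unfold sym; nlinarith [sq_nonneg ‖(2 * π * h) • ξ‖]

lemma fourier_AS (h : ℝ) (f : 𝓢(EuclideanSpace ℝ (Fin n), ℂ)) (ξ) :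
    𝓕 (AS n h f) ξ = (sym h ξ : ℂ) * 𝓕 f ξ := by
  have e : ∀ g : 𝓢(EuclideanSpace ℝ (Fin n), ℂ), 𝓕 g = fourierTransformCLM ℂ g := fun _ => rfl
  rw [AS_eq, e, map_sub, map_smul, lapS_eq, map_sum]
  simp only [← e, sub_apply, smul_apply, sum_coe, fourier_dS, sym_eq]
  push_cast
  have : ∀ i, 2 * π * Complex.I * (ξ i : ℂ) * (2 * π * Complex.I * (ξ i : ℂ) * 𝓕 f ξ) =
      (- (2 * π) ^ 2 * 𝓕 f ξ) * (ξ i : ℂ) ^ 2 := by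
    intro i
    linear_combination (4 * π ^ 2 * (ξ i : ℂ) ^ 2 * 𝓕 f ξ) * Complex.I_sq
  simp only [this, ← Finset.mul_sum, smul_eq_mul]
  ring

lemma fourier_AS_pow (h : ℝ) (m : ℕ) (f : 𝓢(EuclideanSpace ℝ (Fin n), ℂ)) (ξ) :
    𝓕 ((AS n h ^ m) f) ξ = (sym h ξ : ℂ) ^ m * 𝓕 f ξ := by
  induction m with
  | zero => simp
  | succ m ih =>
    rw [pow_succ', Module.End.mul_apply, fourier_AS, ih]; ring

lemma nrm_AS_pow_le (h : ℝ) (m : ℕ) (f : 𝓢(EuclideanSpace ℝ (Fin n), ℂ)) :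
    nrm ((AS n h ^ m) f) ≤ nrm ((AS n h ^ (m + 1)) f) := by
  rw [← nrm_fourier, ← nrm_fourier ((AS n h ^ (m + 1)) f), ← one_mul (nrm (𝓕 ((AS n h ^ (m + 1)) f)))]
  apply nrm_mono
  intro ξ
  have h1 := one_le_sym h ξ
  rw [fourier_AS_pow, fourier_AS_pow, norm_mul, norm_mul, norm_pow, norm_pow, Complex.norm_real,
    norm_of_nonneg (by linarith), one_mul]
  gcongr
  exact Nat.le_succ m

lemma nrm_AS_pow_dS_le (h : ℝ) (i : Fin n) (m : ℕ) (f : 𝓢(EuclideanSpace ℝ (Fin n), ℂ)) :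
    nrm ((AS n h ^ m) ((h : ℂ) • dS i f)) ≤ nrm ((AS n h ^ (m + 1)) f) := by
  rw [← nrm_fourier, ← nrm_fourier ((AS n h ^ (m + 1)) f), ← one_mul (nrm (𝓕 ((AS n h ^ (m + 1)) f)))]
  apply nrm_mono
  intro ξ
  have h1 := one_le_sym h ξ
  have e : ∀ g : 𝓢(EuclideanSpace ℝ (Fin n), ℂ), 𝓕 g = fourierTransformCLM ℂ g := fun _ => rfl
  rw [fourier_AS_pow, fourier_AS_pow, e, map_smul, ← e, smul_apply, fourier_dS,
    norm_mul, norm_mul, norm_pow, norm_pow, Complex.norm_real,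
    norm_of_nonneg (by linarith), one_mul, pow_succ, smul_eq_mul, ← mul_assoc, norm_mul,
    ← mul_assoc]
  have hs0 : 0 ≤ sym h ξ ^ m := by positivity
  refine mul_le_mul_of_nonneg_right (mul_le_mul_of_nonneg_left ?_ hs0) (norm_nonneg (𝓕 f ξ))
  have : ((h : ℂ) * (2 * π * Complex.I * (ξ i : ℂ))) = ((2 * π * h * ξ i : ℝ) : ℂ) * Complex.I := by
    push_cast; ring
  rw [this, norm_mul, Complex.norm_I, mul_one, Complex.norm_real, norm_eq_abs, sym_eq]
  have h2 : ξ i ^ 2 ≤ ∑ j, ξ j ^ 2 :=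
    Finset.single_le_sum (f := fun j => ξ j ^ 2) (fun j _ => sq_nonneg _) (Finset.mem_univ i)
  have h3 : (2 * π * h) ^ 2 * ξ i ^ 2 ≤ (2 * π * h) ^ 2 * ∑ j, ξ j ^ 2 := by gcongr
  have h4 : |2 * π * h * ξ i| ^ 2 = (2 * π * h) ^ 2 * ξ i ^ 2 := by rw [sq_abs]; ring
  nlinarith [sq_nonneg (|2 * π * h * ξ i| - 1), abs_nonneg (2 * π * h * ξ i)]

lemma nrm_le_P (h : ℝ) (g f : 𝓢(EuclideanSpace ℝ (Fin n), ℂ))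
    (hg : ∀ x, ∃ r : ℝ, 0 ≤ r ∧ g x = r) :
    nrm f ≤ nrm ((AS n h + MS g) f) := by
  have key : nrm f ^ 2 ≤ RCLike.re (inner ℂ (f.toLp 2 volume) (((AS n h + MS g) f).toLp 2 volume)) := by
    have e : ((AS n h + MS g) f).toLp 2 volume = (AS n h f).toLp 2 volume + (MS g f).toLp 2 volume :=
      map_add (toLpCLM ℂ ℂ 2 volume) _ _
    rw [e, inner_add_right, map_add]
    have h1 : nrm f ^ 2 ≤ RCLike.re (inner ℂ (f.toLp 2 volume) ((AS n h f).toLp 2 volume)) := by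
      rw [← inner_fourier_toL2_eq, ← nrm_fourier, nrm, ← inner_self_eq_norm_sq (𝕜 := ℂ)]
      rw [L2.inner_def, L2.inner_def, ← integral_re (L2.integrable_inner _ _),
        ← integral_re (L2.integrable_inner _ _)]
      apply integral_mono_ae (L2.integrable_inner _ _).re (L2.integrable_inner _ _).re
      filter_upwards [(𝓕 f).coeFn_toLp 2 volume, (𝓕 (AS n h f)).coeFn_toLp 2 volume] with ξ h1 h2
      simp only [h1, h2, fourier_AS]
      rw [← smul_eq_mul, inner_smul_right, inner_self_eq_norm_sq_to_K]
      have h1 := one_le_sym h ξ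
      have : ((sym h ξ : ℂ) * ((‖𝓕 f ξ‖ : ℂ)) ^ 2) = ((sym h ξ * ‖𝓕 f ξ‖ ^ 2 : ℝ) : ℂ) := by
        push_cast; rfl
      have h' : (((‖𝓕 f ξ‖ : ℂ)) ^ 2) = ((‖𝓕 f ξ‖ ^ 2 : ℝ) : ℂ) := by
        push_cast; rfl
      simp only [RCLike.ofReal_eq_complex_ofReal] at *
      rw [this, h']
      simp only [RCLike.re_eq_complex_re, Complex.ofReal_re]
      nlinarith [sq_nonneg ‖𝓕 f ξ‖]
    have h2 : 0 ≤ RCLike.re (inner ℂ (f.toLp 2 volume) ((MS g f).toLp 2 volume)) := by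
      rw [L2.inner_def, ← integral_re (L2.integrable_inner _ _)]
      apply integral_nonneg_of_ae
      filter_upwards [f.coeFn_toLp 2 volume, (MS g f).coeFn_toLp 2 volume] with ξ h1 h2
      simp only [h1, h2, MS_apply]
      obtain ⟨r, hr, hgr⟩ := hg ξ
      rw [← smul_eq_mul, inner_smul_right, inner_self_eq_norm_sq_to_K, hgr]
      have : ((r : ℂ) * ((‖f ξ‖ : ℂ)) ^ 2) = ((r * ‖f ξ‖ ^ 2 : ℝ) : ℂ) := by
        push_cast; rfl
      simp only [RCLike.ofReal_eq_complex_ofReal] at *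
      rw [this]
      simp only [RCLike.re_eq_complex_re, Complex.ofReal_re, Pi.zero_apply]
      positivity
    linarith
  have cs : RCLike.re (inner ℂ (f.toLp 2 volume) (((AS n h + MS g) f).toLp 2 volume)) ≤
      nrm f * nrm ((AS n h + MS g) f) := re_inner_le_norm _ _
  by_contra hlt
  push Not at hlt
  nlinarith [nrm_nonneg f, nrm_nonneg ((AS n h + MS g) f)]

lemma nrm_le_P_pow (h : ℝ) (g f : 𝓢(EuclideanSpace ℝ (Fin n), ℂ))
    (hg : ∀ x, ∃ r : ℝ, 0 ≤ r ∧ g x = r) (m : ℕ) :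
    nrm (((AS n h + MS g) ^ m) f) ≤ nrm (((AS n h + MS g) ^ (m + 1)) f) := by
  rw [pow_succ', Module.End.mul_apply]
  exact nrm_le_P h g _ hg

lemma dS_MS (i : Fin n) (g f : 𝓢(EuclideanSpace ℝ (Fin n), ℂ)) :
    dS i (MS g f) = MS (dS i g) f + MS g (dS i f) := by
  ext x
  have : (MS g f : EuclideanSpace ℝ (Fin n) → ℂ) = fun x => g x * f x := by
    ext x; exact MS_apply g f x
  rw [dS_apply, this, fderiv_fun_mul g.differentiableAt f.differentiableAt]
  simp only [add_apply, MS_apply, dS_apply]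
  simp
  ring

lemma AS_MS (h : ℝ) (g f : 𝓢(EuclideanSpace ℝ (Fin n), ℂ)) :
    AS n h (MS g f) = MS g (AS n h f) - ((h : ℂ) ^ 2) • MS (lapS n g) f
      - (2 * (h : ℂ)) • ∑ i, MS (dS i g) ((h : ℂ) • dS i f) := by
  ext x
  simp only [AS_eq, lapS_eq, dS_MS, map_add, sub_apply, smul_apply, sum_coe, MS_apply, add_apply,
    smul_eq_mul, Finset.sum_add_distrib, ← Finset.mul_sum, ← Finset.sum_mul]
  have : ∑ i, dS i g x * ((h : ℂ) * dS i f x) = h * ∑ i, dS i g x * dS i f x := by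
    rw [Finset.mul_sum]; congr 1; ext i; ring
  rw [this]
  ring

lemma mult_bound (m : ℕ) : ∀ g : 𝓢(EuclideanSpace ℝ (Fin n), ℂ), ∃ C : ℝ, 0 ≤ C ∧
    ∀ h ∈ Set.Ioc (0 : ℝ) 1, ∀ f : 𝓢(EuclideanSpace ℝ (Fin n), ℂ),
      nrm ((AS n h ^ m) (MS g f)) ≤ C * nrm ((AS n h ^ m) f) := by
  induction m with
  | zero =>
    intro g
    refine ⟨‖g.toBoundedContinuousFunction‖, norm_nonneg _, fun h _ f => ?_⟩
    simp only [pow_zero, Module.End.one_apply]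
    apply nrm_mono
    intro x
    rw [MS_apply, norm_mul]
    gcongr
    exact g.toBoundedContinuousFunction.norm_coe_le_norm x
  | succ m ih =>
    intro g
    obtain ⟨C0, hC0, H0⟩ := ih g
    obtain ⟨C1, hC1, H1⟩ := ih (lapS n g)
    choose C2 hC2 H2 using fun i => ih (dS i g)
    refine ⟨C0 + C1 + 2 * ∑ i, C2 i, ?_, fun h hh f => ?_⟩
    · have := Finset.sum_nonneg (s := Finset.univ) (fun i _ => hC2 i)
      positivity
    have hn : ‖(h : ℂ)‖ ≤ 1 := by
      rw [Complex.norm_real, norm_of_nonneg hh.1.le]; exact hh.2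
    have E : (AS n h ^ (m + 1)) (MS g f) = (AS n h ^ m) (MS g (AS n h f))
        - ((h : ℂ) ^ 2) • (AS n h ^ m) (MS (lapS n g) f)
        - (2 * (h : ℂ)) • ∑ i, (AS n h ^ m) (MS (dS i g) ((h : ℂ) • dS i f)) := by
      rw [pow_succ, Module.End.mul_apply, AS_MS]
      simp only [map_sub, map_smul, map_sum]
    rw [E]
    set T := nrm ((AS n h ^ (m + 1)) f) with hT
    have hT0 : 0 ≤ T := nrm_nonneg _
    have b0 : nrm ((AS n h ^ m) (MS g (AS n h f))) ≤ C0 * T := by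
      have := H0 h hh (AS n h f)
      rwa [← Module.End.mul_apply (AS n h ^ m) (AS n h) f, ← pow_succ] at this
    have b1 : nrm (((h : ℂ) ^ 2) • (AS n h ^ m) (MS (lapS n g) f)) ≤ C1 * T := by
      rw [nrm_smul, norm_pow]
      calc _ ≤ 1 * nrm ((AS n h ^ m) (MS (lapS n g) f)) := by
            gcongr
            · exact nrm_nonneg _
            · exact pow_le_one₀ (norm_nonneg _) hn
        _ ≤ C1 * nrm ((AS n h ^ m) f) := by rw [one_mul]; exact H1 h hh f
        _ ≤ C1 * T := by gcongr; exact nrm_AS_pow_le h m f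
    have b2 : nrm ((2 * (h : ℂ)) • ∑ i, (AS n h ^ m) (MS (dS i g) ((h : ℂ) • dS i f)))
        ≤ (2 * ∑ i, C2 i) * T := by
      rw [nrm_smul, norm_mul, mul_assoc 2 (∑ i, C2 i), Complex.norm_ofNat, Finset.sum_mul]
      calc _ ≤ (2 * 1) * nrm (∑ i, (AS n h ^ m) (MS (dS i g) ((h : ℂ) • dS i f))) := by
            gcongr
            exact nrm_nonneg _
        _ ≤ 2 * ∑ i, nrm ((AS n h ^ m) (MS (dS i g) ((h : ℂ) • dS i f))) := by
            rw [mul_one]; gcongr; exact nrm_sum_le _ _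
        _ ≤ 2 * ∑ i, C2 i * T := by
            gcongr with i
            refine (H2 i h hh _).trans ?_
            gcongr
            · exact hC2 i
            · exact nrm_AS_pow_dS_le h i m f
    have := nrm_sub_le ((AS n h ^ m) (MS g (AS n h f))
        - ((h : ℂ) ^ 2) • (AS n h ^ m) (MS (lapS n g) f))
        ((2 * (h : ℂ)) • ∑ i, (AS n h ^ m) (MS (dS i g) ((h : ℂ) • dS i f)))
    have := nrm_sub_le ((AS n h ^ m) (MS g (AS n h f)))
        (((h : ℂ) ^ 2) • (AS n h ^ m) (MS (lapS n g) f))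
    linarith

lemma comparison (g : 𝓢(EuclideanSpace ℝ (Fin n), ℂ))
    (hg : ∀ x, ∃ r : ℝ, 0 ≤ r ∧ g x = r) (m : ℕ) : ∃ C : ℝ, 0 ≤ C ∧
    ∀ h ∈ Set.Ioc (0 : ℝ) 1, ∀ f : 𝓢(EuclideanSpace ℝ (Fin n), ℂ),
      nrm ((AS n h ^ m) f) ≤ C * nrm (((AS n h + MS g) ^ m) f) := by
  induction m with
  | zero => exact ⟨1, zero_le_one, fun h _ f => by simp⟩
  | succ m ih =>
    obtain ⟨C, hC, H⟩ := ih
    obtain ⟨C', hC', H'⟩ := mult_bound m g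
    refine ⟨C + C' * C, by positivity, fun h hh f => ?_⟩
    have E : (AS n h ^ (m + 1)) f = (AS n h ^ m) ((AS n h + MS g) f) - (AS n h ^ m) (MS g f) := by
      rw [pow_succ, Module.End.mul_apply, ← map_sub]
      simp
    rw [E]
    have b0 := H h hh ((AS n h + MS g) f)
    rw [← Module.End.mul_apply ((AS n h + MS g) ^ m) _ f, ← pow_succ] at b0
    have b1 : nrm ((AS n h ^ m) (MS g f)) ≤ C' * (C * nrm (((AS n h + MS g) ^ (m + 1)) f)) := by
      refine (H' h hh f).trans ?_
      gcongr
      refine (H h hh f).trans ?_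
      gcongr
      exact nrm_le_P_pow h g f hg m
    have := nrm_sub_le ((AS n h ^ m) ((AS n h + MS g) f)) ((AS n h ^ m) (MS g f))
    linarith

/-- Multi-index derivative on Schwartz functions along a list. -/
noncomputable def mdL (α : Fin n → ℕ) (L : List (Fin n)) (f : 𝓢(EuclideanSpace ℝ (Fin n), ℂ)) :
    𝓢(EuclideanSpace ℝ (Fin n), ℂ) :=
  L.foldr (fun i g => (dS i)^[α i] g) f

lemma iter_coe (i : Fin n) (m : ℕ) (f : 𝓢(EuclideanSpace ℝ (Fin n), ℂ)) :
    (pderivE i)^[m] (f : EuclideanSpace ℝ (Fin n) → ℂ) = ((dS i)^[m] f : 𝓢(_, ℂ)) := by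
  induction m generalizing f with
  | zero => rfl
  | succ m ih =>
    rw [Function.iterate_succ_apply, Function.iterate_succ_apply, ← ih]
    rfl

lemma mdL_coe (α : Fin n → ℕ) (L : List (Fin n)) (f : 𝓢(EuclideanSpace ℝ (Fin n), ℂ)) :
    L.foldr (fun i g => (pderivE i)^[α i] g) (f : EuclideanSpace ℝ (Fin n) → ℂ) = mdL α L f := by
  induction L with
  | nil => rfl
  | cons i L ih =>
    simp only [List.foldr_cons, mdL] at *
    rw [ih, iter_coe]

lemma fourier_iter_le (i : Fin n) (m : ℕ) (f : 𝓢(EuclideanSpace ℝ (Fin n), ℂ)) (ξ) :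
    ‖𝓕 ((dS i)^[m] f) ξ‖ ≤ ‖(2 * π) • ξ‖ ^ m * ‖𝓕 f ξ‖ := by
  induction m with
  | zero => simp
  | succ m ih =>
    rw [Function.iterate_succ_apply', fourier_dS, norm_mul, pow_succ', mul_assoc ‖(2 * π) • ξ‖]
    refine mul_le_mul ?_ ih (norm_nonneg _) (norm_nonneg _)
    rw [norm_smul]
    simp only [norm_mul, Complex.norm_I, Complex.norm_real, Complex.norm_ofNat,
      norm_ofNat, mul_one]
    exact mul_le_mul_of_nonneg_left (PiLp.norm_apply_le ξ i) (by positivity)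

lemma fourier_mdL_le (α : Fin n → ℕ) (L : List (Fin n)) (f : 𝓢(EuclideanSpace ℝ (Fin n), ℂ)) (ξ) :
    ‖𝓕 (mdL α L f) ξ‖ ≤ ‖(2 * π) • ξ‖ ^ (L.map α).sum * ‖𝓕 f ξ‖ := by
  induction L with
  | nil => simp [mdL]
  | cons i L ih =>
    have : mdL α (i :: L) f = (dS i)^[α i] (mdL α L f) := rfl
    rw [this, List.map_cons, List.sum_cons, pow_add, mul_assoc]
    refine (fourier_iter_le _ _ _ _).trans ?_
    gcongr

lemma sup_le_int (G : 𝓢(EuclideanSpace ℝ (Fin n), ℂ)) (x) : ‖G x‖ ≤ ∫ ξ, ‖𝓕 G ξ‖ := by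
  have h1 : G x = 𝓕 (𝓕 G) (-x) := by
    have h2 : 𝓕⁻ (𝓕 G) = G := FourierTransform.fourierInv_fourier_eq G
    conv_lhs => rw [← h2]
    rw [fourierInv_apply_eq]
    rfl
  rw [h1]
  refine (norm_fourier_apply_le_toLp_one (𝓕 G) (-x)).trans ?_
  rw [norm_toLp_one]

lemma nrm_sq (f : 𝓢(EuclideanSpace ℝ (Fin n), ℂ)) :
    nrm f = (∫ x, ‖f x‖ ^ (2 : ℝ)) ^ (1 / (2 : ℝ)) := by
  rw [nrm, norm_toLp' (by simp) (by simp)]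
  simp

lemma sobolev (n k : ℕ) : ∃ C : ℝ, 0 ≤ C ∧
    ∀ h ∈ Set.Ioc (0 : ℝ) 1, ∀ f : 𝓢(EuclideanSpace ℝ (Fin n), ℂ), ∀ α : Fin n → ℕ,
      ∑ i, α i ≤ 2 * k → ∀ x,
      ‖mderivE α f x‖ ≤ C * h ^ (-(2 * k : ℝ) - (n : ℝ) / 2) *
        nrm ((AS n h ^ (k + n / 4 + 1)) f) := by
  set p : ℕ := n / 4 + 1 with hp
  have hnp : (n : ℝ) < 4 * p := by
    have : n < 4 * p := by omega
    exact_mod_cast this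
  let φ : EuclideanSpace ℝ (Fin n) → ℝ := fun ζ => (1 + ‖ζ‖ ^ 2) ^ (-(4 * p : ℝ) / 2)
  have hφ : Integrable φ volume := integrable_rpow_neg_one_add_norm_sq (by simpa using hnp)
  have hφ0 : ∀ ζ, 0 ≤ φ ζ := fun ζ => by positivity
  refine ⟨((2 * π) ^ (-(n : ℝ)) * ∫ ζ, φ ζ) ^ (1 / (2 : ℝ)), ?_, ?_⟩
  · have : 0 ≤ ∫ ζ, φ ζ := integral_nonneg hφ0
    positivity
  intro h hh f α hα x
  obtain ⟨h0, h1⟩ := hh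
  have e : mderivE α f = mdL α (List.finRange n) f := mdL_coe α _ f
  rw [e]
  refine (sup_le_int _ x).trans ?_
  set H := 𝓕 ((AS n h ^ (k + n / 4 + 1)) f) with hH
  have hs : ∀ ξ : EuclideanSpace ℝ (Fin n), 0 < sym h ξ := fun ξ =>
    zero_lt_one.trans_le (one_le_sym h ξ)
  let w : EuclideanSpace ℝ (Fin n) → ℝ := fun ξ => (sym h ξ ^ p)⁻¹
  have hw0 : ∀ ξ, 0 ≤ w ξ := fun ξ => by have := hs ξ; positivity
  have hwsq : ∀ ξ, w ξ ^ (2 : ℝ) = φ ((2 * π * h) • ξ) := by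
    intro ξ
    have : φ ((2 * π * h) • ξ) = (sym h ξ) ^ (-(4 * p : ℝ) / 2) := rfl
    rw [this]
    have e2 : (-(4 * p : ℝ) / 2) = -((p * 2 : ℕ) : ℝ) := by push_cast; ring
    rw [e2, rpow_neg (hs ξ).le, rpow_natCast, rpow_two, pow_mul, inv_pow]
  have hc : (2 * π * h) ≠ 0 := by positivity
  have hwint : Integrable (fun ξ => w ξ ^ (2 : ℝ)) volume := by
    simp only [hwsq]
    exact hφ.comp_smul hc
  have hwcont : Continuous w := by
    apply Continuous.inv₀
    · unfold sym; fun_prop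
    · intro ξ; have := hs ξ; positivity
  have hwL : MemLp w (ENNReal.ofReal 2) volume := by
    have := (memLp_two_iff_integrable_sq hwcont.aestronglyMeasurable (μ := volume)).2
      (by simpa using hwint)
    simpa using this
  have hHL : MemLp (fun ξ => ‖H ξ‖) (ENNReal.ofReal 2) volume := by
    have := (H.memLp 2 volume).norm
    simpa using this
  have pt : ∀ ξ, ‖𝓕 (mdL α (List.finRange n) f) ξ‖ ≤ h ^ (-(2 * k : ℝ)) * (w ξ * ‖H ξ‖) := by
    intro ξ
    refine (fourier_mdL_le _ _ _ _).trans ?_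
    have e1 : ((List.finRange n).map α).sum = ∑ i, α i := by
      rw [← List.ofFn_eq_map, List.sum_ofFn]
    rw [e1, hH, fourier_AS_pow, norm_mul, norm_pow, Complex.norm_real, norm_of_nonneg (hs ξ).le,
      add_assoc, ← hp, pow_add]
    have e3 : w ξ * (sym h ξ ^ k * sym h ξ ^ p * ‖𝓕 f ξ‖) = sym h ξ ^ k * ‖𝓕 f ξ‖ := by
      have : w ξ * sym h ξ ^ p = 1 := inv_mul_cancel₀ (pow_pos (hs ξ) p).ne'
      linear_combination (sym h ξ ^ k * ‖𝓕 f ξ‖) * this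
    rw [e3, ← mul_assoc]
    gcongr
    have e4 : sym h ξ = 1 + (h * ‖(2 * π) • ξ‖) ^ 2 := by
      rw [sym, mul_comm (2 * π) h, mul_smul, norm_smul, norm_of_nonneg h0.le]
    set t := ‖(2 * π) • ξ‖
    have ht : 0 ≤ t := norm_nonneg _
    have e5 : h ^ (-(2 * k : ℝ)) = (h ^ (2 * k))⁻¹ := by
      rw [rpow_neg h0.le]; norm_cast
    rw [e5, inv_mul_eq_div, le_div_iff₀ (by positivity)]
    have e6 : (1 : ℝ) ≤ sym h ξ := one_le_sym h ξ
    set a := ∑ i, α i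
    have e7 : (h * t) ≤ sym h ξ ^ (1/2 : ℝ) := by
      rw [← sqrt_eq_rpow]
      apply le_sqrt_of_sq_le; rw [e4]; linarith
    calc t ^ a * h ^ (2 * k) ≤ t ^ a * h ^ a := by
          gcongr ?_ * ?_
          exact pow_le_pow_of_le_one h0.le h1 hα
      _ = (h * t) ^ a := by rw [mul_pow]; ring
      _ ≤ (sym h ξ ^ (1/2 : ℝ)) ^ a := by gcongr
      _ ≤ (sym h ξ ^ (1/2 : ℝ)) ^ (2 * k) := by
          apply pow_le_pow_right₀ _ hα
          exact one_le_rpow e6 (by norm_num)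
      _ = sym h ξ ^ k := by
          rw [pow_mul, ← rpow_natCast (sym h ξ ^ (1/2 : ℝ)) 2, ← rpow_mul (hs ξ).le]
          norm_num
  have I1 : Integrable (fun ξ => w ξ * ‖H ξ‖) volume := by
    have hHL' : MemLp (fun ξ => ‖H ξ‖) 2 volume := by simpa using hHL
    have hwL' : MemLp w 2 volume := by simpa using hwL
    exact hwL'.integrable_mul hHL'
  calc ∫ ξ, ‖𝓕 (mdL α (List.finRange n) f) ξ‖ ≤ ∫ ξ, h ^ (-(2 * k : ℝ)) * (w ξ * ‖H ξ‖) :=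
        integral_mono (𝓕 (mdL α (List.finRange n) f)).integrable.norm (I1.const_mul _) pt
    _ = h ^ (-(2 * k : ℝ)) * ∫ ξ, (w ξ * ‖H ξ‖) := integral_const_mul _ _
    _ ≤ h ^ (-(2 * k : ℝ)) * ((∫ ξ, w ξ ^ (2 : ℝ)) ^ (1 / (2 : ℝ)) *
          (∫ ξ, ‖H ξ‖ ^ (2 : ℝ)) ^ (1 / (2 : ℝ))) := by
        gcongr
        exact integral_mul_le_Lp_mul_Lq_of_nonneg Real.HolderConjugate.two_two
          (.of_forall hw0) (.of_forall fun ξ => norm_nonneg _) hwL hHL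
    _ = _ := by
        rw [← nrm_sq, hH, nrm_fourier, ← mul_assoc]
        congr 1
        simp only [hwsq]
        rw [Measure.integral_comp_smul]
        simp only [finrank_euclideanSpace, Fintype.card_fin, smul_eq_mul]
        rw [abs_of_nonneg (by positivity), rpow_sub h0, rpow_neg (by positivity : 0 ≤ 2 * π),
          rpow_natCast, mul_pow, mul_inv, mul_right_comm _ _ (∫ ζ, φ ζ)]
        rw [mul_rpow (mul_nonneg (by positivity) (integral_nonneg hφ0)) (by positivity)]
        have : ((h ^ n)⁻¹) ^ (1 / 2 : ℝ) = (h ^ ((n : ℝ) / 2))⁻¹ := by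
          rw [inv_rpow (by positivity), ← rpow_natCast, ← rpow_mul h0.le]
          congr 2; ring
        rw [this]
        ring

lemma cutoff (Ω : Set (EuclideanSpace ℝ (Fin n)))
    (hΩbd : Bornology.IsBounded Ω)
    (V : EuclideanSpace ℝ (Fin n) → ℝ)
    (hV1 : ∀ x, 1 ≤ V x)
    (U : Set (EuclideanSpace ℝ (Fin n)))
    (hUopen : IsOpen U) (hclosure : closure Ω ⊆ U)
    (hVsmooth : ContDiffOn ℝ (⊤ : ℕ∞) V U) :
    ∃ g : 𝓢(EuclideanSpace ℝ (Fin n), ℂ), (∀ x, ∃ r : ℝ, 0 ≤ r ∧ g x = r) ∧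
      ∀ x ∈ Ω, (V x : ℂ) = 1 + g x := by
  have hK : IsCompact (closure Ω) := hΩbd.isCompact_closure
  obtain ⟨K', hK'c, hK1, hK2⟩ := exists_compact_between hK hUopen hclosure
  obtain ⟨χ, hχ1, hχ0, hχ⟩ := exists_contMDiffMap_one_nhds_of_subset_interior
    (n := (⊤ : ℕ∞)) (modelWithCornersSelf ℝ (EuclideanSpace ℝ (Fin n))) isClosed_closure hK1
  have hχs : ContDiff ℝ (⊤ : ℕ∞) χ := χ.contMDiff.contDiff
  have hsupp : tsupport χ ⊆ K' := by
    apply closure_minimal _ hK'c.isClosed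
    intro x hx
    by_contra hxK
    exact hx (hχ0 x hxK)
  let G : EuclideanSpace ℝ (Fin n) → ℂ := fun x => ((χ x * (V x - 1) : ℝ) : ℂ)
  have hGsupp : tsupport G ⊆ tsupport χ := by
    apply closure_mono
    intro x hx hx0
    apply hx
    simp only [G]
    rw [hx0]; simp
  have hGc : HasCompactSupport G := hK'c.of_isClosed_subset (isClosed_tsupport _)
    (hGsupp.trans hsupp)
  have hGs : ContDiff ℝ (⊤ : ℕ∞) G := by
    rw [contDiff_iff_contDiffAt]
    intro x
    by_cases hx : x ∈ tsupport G
    swap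
    · exact contDiffAt_const.congr_of_eventuallyEq (notMem_tsupport_iff_eventuallyEq.1 hx)
    have hxU : x ∈ U := hK2 (hsupp (hGsupp hx))
    have hVx : ContDiffAt ℝ (⊤ : ℕ∞) V x := hVsmooth.contDiffAt (hUopen.mem_nhds hxU)
    exact Complex.ofRealCLM.contDiff.contDiffAt.comp x
      (hχs.contDiffAt.mul (hVx.sub contDiffAt_const))
  refine ⟨hGc.toSchwartzMap hGs, fun x => ⟨χ x * (V x - 1), ?_, rfl⟩, fun x hx => ?_⟩
  · exact mul_nonneg (hχ x).1 (by linarith [hV1 x])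
  · have : χ x = 1 := hχ1.self_of_nhdsSet x (subset_closure hx)
    change (V x : ℂ) = 1 + ((χ x * (V x - 1) : ℝ) : ℂ)
    rw [this]; push_cast; ring

lemma tsupport_dS (i : Fin n) (f : 𝓢(EuclideanSpace ℝ (Fin n), ℂ)) :
    tsupport (dS i f) ⊆ tsupport f :=
  tsupport_lineDerivOp_subset _ f

lemma P_apply (h : ℝ) (g f : 𝓢(EuclideanSpace ℝ (Fin n), ℂ)) (x) :
    (AS n h + MS g) f x = f x - (h : ℂ) ^ 2 * laplacianC f x + g x * f x := by
  rw [LinearMap.add_apply, add_apply, AS_eq, MS_apply, sub_apply, smul_apply, lapS_apply]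
  rfl

lemma laplacianC_zero (f : 𝓢(EuclideanSpace ℝ (Fin n), ℂ)) (x) (hx : x ∉ tsupport f) :
    laplacianC f x = 0 := by
  rw [← lapS_apply, lapS_eq, sum_coe]
  apply Finset.sum_eq_zero
  intro i _
  apply image_eq_zero_of_notMem_tsupport
  intro h
  exact hx (tsupport_dS i f (tsupport_dS i _ h))

lemma tsupport_P (h : ℝ) (g f : 𝓢(EuclideanSpace ℝ (Fin n), ℂ)) :
    tsupport ((AS n h + MS g) f) ⊆ tsupport f := by
  apply closure_minimal _ (isClosed_tsupport _)
  intro x hx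
  by_contra hxf
  apply hx
  rw [P_apply, laplacianC_zero f x hxf, image_eq_zero_of_notMem_tsupport hxf]
  simp

lemma schr_eq (h : ℝ) (V : EuclideanSpace ℝ (Fin n) → ℝ) (Ω : Set (EuclideanSpace ℝ (Fin n)))
    (g : 𝓢(EuclideanSpace ℝ (Fin n), ℂ)) (hVg : ∀ x ∈ Ω, (V x : ℂ) = 1 + g x)
    (f : 𝓢(EuclideanSpace ℝ (Fin n), ℂ)) (hf : tsupport f ⊆ Ω) :
    schrodingerOp h V f = (AS n h + MS g) f := by
  ext x
  rw [P_apply, schrodingerOp]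
  simp only [Complex.real_smul]
  by_cases hx : x ∈ tsupport f
  · rw [hVg x (hf hx)]; push_cast; ring
  · rw [laplacianC_zero f x hx, image_eq_zero_of_notMem_tsupport hx]; simp

lemma schr_iter_eq (h : ℝ) (V : EuclideanSpace ℝ (Fin n) → ℝ)
    (Ω : Set (EuclideanSpace ℝ (Fin n)))
    (g : 𝓢(EuclideanSpace ℝ (Fin n), ℂ)) (hVg : ∀ x ∈ Ω, (V x : ℂ) = 1 + g x) (m : ℕ)
    (f : 𝓢(EuclideanSpace ℝ (Fin n), ℂ)) (hf : tsupport f ⊆ Ω) :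
    (schrodingerOp h V)^[m] f = ((AS n h + MS g) ^ m) f := by
  induction m generalizing f with
  | zero => rfl
  | succ m ih =>
    rw [Function.iterate_succ_apply, schr_eq h V Ω g hVg f hf, pow_succ, Module.End.mul_apply]
    exact ih _ ((tsupport_P h g f).trans hf)

end EllEst

/-- semiclassical elliptic estimate with potential
`‖f‖_{C^{2k}} ≤ C ħ^{−2k−n/2} ‖(V − ħ²Δ)^{k+⌊n/4⌋+1} f‖_{L²}` for smooth `f`
compactly supported in a bounded open set `Ω` on a neighborhood of whose closure
`V ≥ 1` is smooth. -/
theorem elliptic_estimate_with_potential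
    (n : ℕ) (hn : 1 ≤ n)
    (Ω : Set (EuclideanSpace ℝ (Fin n)))
    (hΩopen : IsOpen Ω) (hΩbd : Bornology.IsBounded Ω)
    (V : EuclideanSpace ℝ (Fin n) → ℝ)
    (hV1 : ∀ x, 1 ≤ V x)
    (U : Set (EuclideanSpace ℝ (Fin n)))
    (hUopen : IsOpen U) (hclosure : closure Ω ⊆ U)
    (hVsmooth : ContDiffOn ℝ (⊤ : ℕ∞) V U) :
    ∀ k : ℕ, ∃ C : ℝ, 0 < C ∧
      ∀ f : EuclideanSpace ℝ (Fin n) → ℂ,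
        ContDiff ℝ (⊤ : ℕ∞) f → HasCompactSupport f → tsupport f ⊆ Ω →
        ∀ hbar ∈ Set.Ioc (0 : ℝ) 1,
          ENNReal.ofReal (CkNorm (2 * k) f) ≤
            ENNReal.ofReal (C * hbar ^ (-(2 * k : ℝ) - (n : ℝ) / 2)) *
              eLpNorm ((schrodingerOp hbar V)^[k + n / 4 + 1] f) 2
                (volume : Measure (EuclideanSpace ℝ (Fin n))) := by
  intro k
  obtain ⟨g, hg, hVg⟩ := EllEst.cutoff Ω hΩbd V hV1 U hUopen hclosure hVsmooth
  obtain ⟨C1, hC1, H1⟩ := EllEst.sobolev n k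
  obtain ⟨C2, hC2, H2⟩ := EllEst.comparison g hg (k + n / 4 + 1)
  obtain ⟨c, hc⟩ : ∃ c : ℝ, c = ∑ j ∈ Finset.range (2 * k + 1), ∑ α ∈ multiIndices n j, (1 : ℝ) :=
    ⟨_, rfl⟩
  have hc0 : 0 ≤ c := hc ▸ Finset.sum_nonneg fun j _ => Finset.sum_nonneg fun α _ => zero_le_one
  refine ⟨c * (C1 * C2) + 1, by positivity, ?_⟩
  intro f hf hfc hfΩ h hh
  let F : SchwartzMap (EuclideanSpace ℝ (Fin n)) ℂ := hfc.toSchwartzMap hf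
  have hF : f = F := rfl
  have hS : (schrodingerOp h V)^[k + n / 4 + 1] f =
      ((EllEst.AS n h + EllEst.MS g) ^ (k + n / 4 + 1)) F :=
    EllEst.schr_iter_eq h V Ω g hVg _ F hfΩ
  rw [hS]
  have H2' := H2 h hh F
  have H1' := H1 h hh F
  generalize ((EllEst.AS n h + EllEst.MS g) ^ (k + n / 4 + 1)) F = P at H2' ⊢
  have hN : eLpNorm P 2 volume = ENNReal.ofReal (EllEst.nrm P) := by
    rw [EllEst.nrm, SchwartzMap.norm_toLp, ENNReal.ofReal_toReal]
    exact (P.memLp 2 volume).2.ne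
  have h0 : 0 < h := hh.1
  have hq0 : 0 ≤ h ^ (-(2 * k : ℝ) - (n : ℝ) / 2) := by positivity
  generalize h ^ (-(2 * k : ℝ) - (n : ℝ) / 2) = q at H1' hq0 ⊢
  rw [hN, ← ENNReal.ofReal_mul (by positivity)]
  apply ENNReal.ofReal_le_ofReal
  have hP0 := EllEst.nrm_nonneg P
  apply ciSup_le
  intro x
  calc ∑ j ∈ Finset.range (2 * k + 1), ∑ α ∈ multiIndices n j, ‖mderivE α f x‖
      ≤ ∑ j ∈ Finset.range (2 * k + 1), ∑ α ∈ multiIndices n j,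
          1 * (C1 * q * (C2 * EllEst.nrm P)) := by
        apply Finset.sum_le_sum
        intro j hj
        apply Finset.sum_le_sum
        intro α hα
        have hα' : ∑ i, α i ≤ 2 * k := by
          rw [(Finset.mem_filter.1 hα).2]
          exact Nat.lt_succ_iff.1 (Finset.mem_range.1 hj)
        rw [one_mul]
        refine (H1' α hα' x).trans ?_
        exact mul_le_mul_of_nonneg_left H2' (by positivity)
    _ = c * (C1 * q * (C2 * EllEst.nrm P)) := by
        simp only [hc, Finset.sum_mul]
    _ ≤ (c * (C1 * C2) + 1) * q * EllEst.nrm P := by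
        have : 0 ≤ q * EllEst.nrm P := by positivity
        nlinarith
end
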